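/- arXiv:1609.04195 — 2 statements merged into one kernel-verified Lean document; each statement's English description precedes it below -/
import Mathlib

section
/- Let 0 ≤ δ ≤ 1/4 and let A be an n×n complex Hermitian matrix with 0 ⪯ A ⪯ I whose diagonal entries all satisfy A_{ii} ≤ δ. Then there exists a partition X₁ ⊔ X₂ = {1,…,n} into two disjoint sets such that for i = 1, 2 the largest eigenvalue of P_{X_i} A P_{X_i} is at most (1/4)·(√(3(1−δ)) + √δ)², where P_X denotes the diagonal 0-1 projection matrix onto the coordinates in X. -/
open Polynomial Matrix
open scoped ComplexOrder

/-- The diagonal 0-1 projection matrix onto the coordinates in `X`. -/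
def proj {n : ℕ} (X : Finset (Fin n)) : Matrix (Fin n) (Fin n) ℂ :=
  Matrix.diagonal fun i => if i ∈ X then 1 else 0


namespace TwoPaving

open Function ComplexConjugate

section Abstract

set_option linter.unusedSectionVars false

variable {ι : Type*} [DecidableEq ι]

/-- Partial derivative of a multi-affine function, as a finite difference. -/
noncomputable def DD (i : ι) (F : (ι → ℂ) → ℂ) : (ι → ℂ) → ℂ :=
  fun z => F (update z i 1) - F (update z i 0)

lemma DD_comm (i j : ι) (F : (ι → ℂ) → ℂ) : DD i (DD j F) = DD j (DD i F) := by
  by_cases h : i = j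
  · subst h; rfl
  · funext z
    simp only [DD]
    rw [update_comm h, update_comm h, update_comm h, update_comm h]
    ring

lemma DD_add (i : ι) (F G : (ι → ℂ) → ℂ) : DD i (F + G) = DD i F + DD i G := by
  funext z; simp only [DD, Pi.add_apply]; ring

lemma DD_update (i : ι) (F : (ι → ℂ) → ℂ) (z : ι → ℂ) (t : ℂ) :
    DD i F (update z i t) = DD i F z := by
  simp [DD]

lemma DD_self (i : ι) (F : (ι → ℂ) → ℂ) : DD i (DD i F) = 0 := by
  funext z
  show DD i F (update z i 1) - DD i F (update z i 0) = 0
  rw [DD_update, DD_update, sub_self]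

/-- Iterated derivative. -/
noncomputable def iterD (l : List ι) (F : (ι → ℂ) → ℂ) : (ι → ℂ) → ℂ := l.foldr DD F

lemma iterD_cons (a : ι) (l : List ι) (F : (ι → ℂ) → ℂ) :
    iterD (a :: l) F = DD a (iterD l F) := rfl

lemma iterD_DD (a : ι) (l : List ι) (F : (ι → ℂ) → ℂ) :
    iterD l (DD a F) = DD a (iterD l F) := by
  induction l with
  | nil => rfl
  | cons b l ih => rw [iterD_cons, ih, DD_comm, iterD_cons]

lemma iterD_add (l : List ι) (F G : (ι → ℂ) → ℂ) :
    iterD l (F + G) = iterD l F + iterD l G := by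
  induction l with
  | nil => rfl
  | cons b l ih => rw [iterD_cons, ih, DD_add]; rfl

/-- Multi-affine functions. -/
def MA (F : (ι → ℂ) → ℂ) : Prop :=
  ∀ i z t, F (update z i t) = F (update z i 0) + t * DD i F z

lemma MA.shift {F : (ι → ℂ) → ℂ} (h : MA F) (i : ι) (z : ι → ℂ) (t : ℂ) :
    F (update z i (z i + t)) = F z + t * DD i F z := by
  have h1 := h i z (z i + t)
  have h2 := h i z (z i)
  rw [update_eq_self] at h2
  rw [h1, h2]; ring

lemma MA.dd {F : (ι → ℂ) → ℂ} (h : MA F) (j : ι) : MA (DD j F) := by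
  intro i z t
  by_cases hij : i = j
  · subst hij
    rw [DD_update, DD_update, DD_self]; simp
  · have e : DD i (DD j F) z = DD i F (update z j 1) - DD i F (update z j 0) := by
      rw [DD_comm]; rfl
    rw [e]
    simp only [DD]
    rw [update_comm hij, update_comm hij, update_comm hij, update_comm hij]
    have h1 := h i (update z j 1) t
    have h2 := h i (update z j 0) t
    rw [h1, h2]
    simp only [DD]
    ring

lemma MA.add {F G : (ι → ℂ) → ℂ} (hF : MA F) (hG : MA G) : MA (F + G) := by
  intro i z t
  rw [DD_add]
  simp only [Pi.add_apply]
  rw [hF i z t, hG i z t]; ring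

/-- The class of real stable multi-affine functions, with nonvanishing derivatives
in directions from `U`. -/
structure Good (U : Set ι) (F : (ι → ℂ) → ℂ) : Prop where
  ma : MA F
  cont : Continuous F
  real : ∀ z : ι → ℂ, F (fun i => conj (z i)) = conj (F z)
  st : ∀ l : List ι, l.Nodup → (∀ i ∈ l, i ∈ U) → ∀ z : ι → ℂ, (∀ i, 0 < (z i).im) →
    iterD l F z ≠ 0

lemma continuous_DD {F : (ι → ℂ) → ℂ} (h : Continuous F) (a : ι) : Continuous (DD a F) := by
  unfold DD
  exact (h.comp (continuous_id.update a continuous_const)).sub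
    (h.comp (continuous_id.update a continuous_const))

lemma real_DD {F : (ι → ℂ) → ℂ} (h : ∀ z : ι → ℂ, F (fun i => conj (z i)) = conj (F z)) (a : ι) :
    ∀ z : ι → ℂ, DD a F (fun i => conj (z i)) = conj (DD a F z) := by
  intro z
  have key : ∀ t : ℂ, conj t = t → update (fun i => conj (z i)) a t
      = fun i => conj (update z a t i) := by
    intro t ht
    funext i
    by_cases hi : i = a
    · subst hi; simp [ht]
    · simp [hi]
  simp only [DD]
  rw [key 1 (by simp), key 0 (by simp), h, h, map_sub]

lemma Good.mono {U V : Set ι} {F : (ι → ℂ) → ℂ} (h : Good U F) (hV : V ⊆ U) : Good V F :=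
  ⟨h.ma, h.cont, h.real, fun l hl hm => h.st l hl (fun i hi => hV (hm i hi))⟩

lemma Good.dd {U : Set ι} {F : (ι → ℂ) → ℂ} (h : Good U F) {a : ι} (ha : a ∈ U) :
    Good (U \ {a}) (DD a F) := by
  refine ⟨h.ma.dd a, continuous_DD h.cont a, real_DD h.real a, ?_⟩
  intro l hl hm z hz
  rw [iterD_DD, ← iterD_cons]
  refine h.st (a :: l) (List.nodup_cons.2 ⟨fun hal => (hm a hal).2 rfl, hl⟩) ?_ z hz
  intro i hi
  rcases List.mem_cons.1 hi with rfl | hi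
  · exact ha
  · exact (hm i hi).1

lemma im_pos {F : (ι → ℂ) → ℂ} (h : MA F) (hst : ∀ z : ι → ℂ, (∀ i, 0 < (z i).im) → F z ≠ 0)
    (i : ι) (z : ι → ℂ) (hz : ∀ i, 0 < (z i).im) (hne : DD i F z ≠ 0) :
    0 < (F z * conj (DD i F z)).im := by
  by_contra hcon
  push Not at hcon
  set c := DD i F z with hc
  have h0 : F (update z i (z i + (-(F z) / c))) = 0 := by
    rw [h.shift, ← hc]; field_simp; ring
  refine hst _ ?_ h0
  intro k
  by_cases hk : k = i
  · subst hk
    rw [update_self]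
    have : (-(F z) / c).im = - (F z * conj c).im / Complex.normSq c := by
      rw [Complex.div_im]
      simp only [Complex.mul_im, Complex.conj_re, Complex.conj_im, Complex.neg_im, Complex.neg_re]
      ring
    have h3 : 0 ≤ (-(F z) / c).im := by
      rw [this]
      exact div_nonneg (by linarith) (Complex.normSq_nonneg _)
    have := hz k
    simp only [Complex.add_im]; linarith
  · rw [update_of_ne hk]; exact hz k

lemma Good.sum {U : Set ι} {F : (ι → ℂ) → ℂ} (h : Good U F) {a b : ι} (ha : a ∈ U) (hb : b ∈ U) :
    Good (U \ {a, b}) (DD a F + DD b F) := by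
  refine ⟨(h.ma.dd a).add (h.ma.dd b), (continuous_DD h.cont a).add (continuous_DD h.cont b), ?_, ?_⟩
  · intro z
    simp only [Pi.add_apply]
    rw [real_DD h.real, real_DD h.real, map_add]
  · intro l hl hm z hz
    rw [iterD_add, iterD_DD, iterD_DD]
    have hma : MA (iterD l F) := by
      clear hl hm
      induction l with
      | nil => exact h.ma
      | cons b l ih => exact ih.dd b
    have hst : ∀ z : ι → ℂ, (∀ i, 0 < (z i).im) → iterD l F z ≠ 0 :=
      h.st l hl (fun i hi => (hm i hi).1)
    have key : ∀ c ∈ U, c ∉ l → DD c (iterD l F) z ≠ 0 := by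
      intro c hc hcl
      rw [← iterD_cons]
      refine h.st (c :: l) (List.nodup_cons.2 ⟨hcl, hl⟩) ?_ z hz
      intro i hi
      rcases List.mem_cons.1 hi with rfl | hi
      · exact hc
      · exact (hm i hi).1
    have h1 := im_pos hma hst a z hz (key a ha (fun hal => (hm a hal).2 (by simp)))
    have h2 := im_pos hma hst b z hz (key b hb (fun hal => (hm b hal).2 (by simp)))
    intro h0
    simp only [Pi.add_apply] at h0
    have h3 : (iterD l F z * conj (DD a (iterD l F) z + DD b (iterD l F) z)).im = 0 := by
      rw [h0]; simp
    rw [map_add, mul_add, Complex.add_im] at h3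
    linarith

/-- Restriction to real points. -/
noncomputable def R (F : (ι → ℂ) → ℂ) (x : ι → ℝ) : ℝ := (F (fun i => (x i : ℂ))).re

lemma R_add (F G : (ι → ℂ) → ℂ) (x : ι → ℝ) : R (F + G) x = R F x + R G x := by
  simp [R]

lemma coe_R {F : (ι → ℂ) → ℂ} (h : ∀ z : ι → ℂ, F (fun i => conj (z i)) = conj (F z))
    (x : ι → ℝ) : F (fun i => (x i : ℂ)) = (R F x : ℂ) := by
  have := h (fun i => (x i : ℂ))
  simp only [Complex.conj_ofReal] at this
  exact ((Complex.conj_eq_iff_re.1 this.symm)).symm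

lemma coe_update (x : ι → ℝ) (i : ι) (t : ℝ) :
    (fun k => ((update x i t k : ℝ) : ℂ)) = update (fun k => (x k : ℂ)) i (t : ℂ) := by
  funext k
  by_cases hk : k = i
  · subst hk; simp
  · simp [hk]

lemma R_shift {F : (ι → ℂ) → ℂ} (h : MA F) (x : ι → ℝ) (i : ι) (t : ℝ) :
    R F (update x i (x i + t)) = R F x + t * R (DD i F) x := by
  unfold R
  rw [coe_update, Complex.ofReal_add, h.shift i (fun k => (x k : ℂ)) t]
  simp

lemma R_DD_update (F : (ι → ℂ) → ℂ) (x : ι → ℝ) (i : ι) (t : ℝ) :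
    R (DD i F) (update x i t) = R (DD i F) x := by
  unfold R
  rw [coe_update, DD_update]

/-- Rayleigh inequality. -/
lemma Good.rayleigh {U : Set ι} {F : (ι → ℂ) → ℂ} (h : Good U F) {i j : ι} (hij : i ≠ j)
    (x : ι → ℝ) : R F x * R (DD i (DD j F)) x ≤ R (DD i F) x * R (DD j F) x := by
  have hst : ∀ z : ι → ℂ, (∀ i, 0 < (z i).im) → F z ≠ 0 := h.st [] (by simp) (by simp)
  have h1 : ∀ z : ι → ℂ, (∀ i, 0 < (z i).im) → 0 ≤ (F z * conj (DD i F z)).im := by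
    intro z hz
    by_cases hne : DD i F z = 0
    · rw [hne]; simp
    · exact (im_pos h.ma hst i z hz hne).le
  have h2 : ∀ z : ι → ℂ, (∀ i, 0 ≤ (z i).im) → 0 ≤ (F z * conj (DD i F z)).im := by
    intro z hz
    let g : ℝ → ℝ := fun e => (F (fun k => z k + e * Complex.I) *
      conj (DD i F (fun k => z k + e * Complex.I))).im
    have hc : Continuous (fun e : ℝ => (fun k => z k + e * Complex.I : ι → ℂ)) := by fun_prop
    have hg : Continuous g := by
      apply Complex.continuous_im.comp
      exact (h.cont.comp hc).mul (Complex.continuous_conj.comp ((continuous_DD h.cont i).comp hc))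
    have hlim : Filter.Tendsto g (nhdsWithin 0 (Set.Ioi 0)) (nhds (g 0)) :=
      (hg.tendsto 0).mono_left nhdsWithin_le_nhds
    have : 0 ≤ g 0 := by
      refine ge_of_tendsto hlim ?_
      filter_upwards [self_mem_nhdsWithin] with e he
      apply h1
      intro k
      have := hz k
      have he' : 0 < e := he
      simp; linarith
    simpa [g] using this
  have h3 := h2 (update (fun k => (x k : ℂ)) j ((x j : ℂ) + Complex.I)) (by
    intro k
    by_cases hk : k = j
    · subst hk; simp
    · simp [hk])
  rw [h.ma.shift j (fun k => (x k : ℂ)), (h.ma.dd i).shift j (fun k => (x k : ℂ)), DD_comm j i] at h3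
  rw [coe_R h.real, coe_R (real_DD h.real _), coe_R (real_DD h.real _),
    coe_R (real_DD (real_DD h.real _) _)] at h3
  simp at h3
  linarith

/-- Orthant induction. -/
lemma orthant_ind [Fintype ι] (Q : (ι → ℝ) → Prop) (x : ι → ℝ) (h0 : Q x)
    (hs : ∀ y, x ≤ y → Q y → ∀ i t, 0 ≤ t → Q (update y i (y i + t))) :
    ∀ y, x ≤ y → Q y := by
  intro y hy
  have key : ∀ S : Finset ι, Q (fun i => if i ∈ S then y i else x i) := by
    intro S
    induction S using Finset.induction_on with
    | empty => simpa using h0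
    | insert a S ha ih =>
      have := hs _ (fun i => by by_cases h : i ∈ S <;> simp [h, hy i]) ih a (y a - x a)
        (by linarith [hy a])
      convert this using 1
      funext i
      by_cases hi : i = a
      · subst hi; simp [ha]
      · simp [hi]
  simpa using key Finset.univ

lemma vanish [Fintype ι] {F : (ι → ℂ) → ℂ} (h : MA F) (x : ι → ℝ)
    (h0 : ∀ y : ι → ℝ, x ≤ y → F (fun i => (y i : ℂ)) = 0) (z : ι → ℂ) : F z = 0 := by
  have key : ∀ S : Finset ι, ∀ z : ι → ℂ, (∀ i ∉ S, ∃ r : ℝ, x i ≤ r ∧ z i = r) → F z = 0 := by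
    intro S
    induction S using Finset.induction_on with
    | empty =>
      intro z hz
      choose r hr using fun i => hz i (by simp)
      have : z = fun i => (r i : ℂ) := funext fun i => (hr i).2
      rw [this]
      exact h0 r (fun i => (hr i).1)
    | insert a S ha ih =>
      intro z hz
      have hr : ∀ r : ℝ, x a ≤ r → F (update z a r) = 0 := by
        intro r hr
        apply ih
        intro i hi
        by_cases hia : i = a
        · subst hia; exact ⟨r, hr, by simp⟩
        · rw [update_of_ne hia]
          exact hz i (by simp [hi, hia])
      have h1 := hr (x a) le_rfl
      have h2 := hr (x a + 1) (by linarith)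
      have h3 := h a z (z a)
      rw [h a z] at h1 h2
      rw [update_eq_self] at h3
      push_cast at h2
      have h4 : DD a F z = 0 := by linear_combination h2 - h1
      rw [h3]
      rw [h4] at h1 ⊢
      linear_combination h1
  exact key Finset.univ z (by simp)

/-- Positivity on the orthant above `x`. -/
def Pos (F : (ι → ℂ) → ℂ) (x : ι → ℝ) : Prop := ∀ y, x ≤ y → 0 < R F y

lemma le_update (y : ι → ℝ) (i : ι) {t : ℝ} (ht : 0 ≤ t) : y ≤ update y i (y i + t) := by
  intro k
  by_cases hk : k = i
  · subst hk; simp [ht]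
  · simp [hk]

lemma nonneg_DD {F : (ι → ℂ) → ℂ} (h : MA F) {x : ι → ℝ} (hp : ∀ y, x ≤ y → 0 ≤ R F y) (a : ι) :
    ∀ y, x ≤ y → 0 ≤ R (DD a F) y := by
  intro y hy
  by_contra hc
  push Not at hc
  have h1 := hp y hy
  set t := (R F y + 1) / (- R (DD a F) y) with ht
  have ht0 : 0 ≤ t := div_nonneg (by linarith) (by linarith)
  have := hp _ (hy.trans (le_update y a ht0))
  rw [R_shift h] at this
  have h2 : t * R (DD a F) y = - (R F y + 1) := by
    have hne : R (DD a F) y ≠ 0 := ne_of_lt hc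
    rw [ht]; field_simp
  linarith

lemma Good.pos_DD [Fintype ι] {U : Set ι} {F : (ι → ℂ) → ℂ} (h : Good U F) {x : ι → ℝ}
    (hp : Pos F x) {a : ι} (ha : a ∈ U) : Pos (DD a F) x := by
  have hnn := nonneg_DD h.ma (fun y hy => (hp y hy).le) a
  intro y hy
  rcases (hnn y hy).lt_or_eq with hlt | heq
  · exact hlt
  exfalso
  have hz : ∀ w, y ≤ w → R (DD a F) w = 0 := by
    apply orthant_ind (fun w => R (DD a F) w = 0) y heq.symm
    intro w hw hw0 i t ht
    have hge := hnn _ ((hy.trans hw).trans (le_update w i ht))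
    by_cases hi : i = a
    · subst hi; rw [R_DD_update]; exact hw0
    · have hr := h.rayleigh hi w
      rw [R_shift (h.ma.dd a), hw0] at hge ⊢
      rw [hw0] at hr
      have hpw := hp w (hy.trans hw)
      have : R (DD i (DD a F)) w ≤ 0 := by
        by_contra hc
        push Not at hc
        nlinarith
      nlinarith
  have := vanish (h.ma.dd a) y (fun w hw => by
    rw [coe_R (real_DD h.real a), hz w hw]; simp) (fun _ => Complex.I)
  exact h.st [a] (by simp) (by simpa using ha) (fun _ => Complex.I) (by simp) this

/-- Selection step. -/
lemma Good.select [Fintype ι] {U : Set ι} {H : (ι → ℂ) → ℂ} (h : Good U H) {u v : ι} (huv : u ≠ v)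
    (hu : u ∈ U) (hv : v ∈ U) {x : ι → ℝ} (hp : Pos (DD u H + DD v H) x) :
    Pos (DD u H) x ∨ Pos (DD v H) x := by
  have hg := h.sum hu hv
  have hh : Pos (DD u (DD v H)) x := by
    have e : DD v (DD u H + DD v H) = DD u (DD v H) := by
      rw [DD_add, DD_self, DD_comm, add_zero]
    have hnn := nonneg_DD hg.ma (fun y hy => (hp y hy).le) v
    -- strict positivity through the vanishing argument
    intro y hy
    rw [e] at hnn
    rcases (hnn y hy).lt_or_eq with hlt | heq
    · exact hlt
    exfalso
    have hz : ∀ w, y ≤ w → R (DD u (DD v H)) w = 0 := by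
      apply orthant_ind (fun w => R (DD u (DD v H)) w = 0) y heq.symm
      intro w hw hw0 i t ht
      have hge := hnn _ ((hy.trans hw).trans (le_update w i ht))
      by_cases hi : i = v
      · subst hi; rw [DD_comm, R_DD_update, DD_comm]; exact hw0
      · have hr := hg.rayleigh hi w
        rw [e] at hr
        rw [R_shift ((h.ma.dd v).dd u), hw0] at hge ⊢
        rw [hw0] at hr
        have hpw := hp w (hy.trans hw)
        have : R (DD i (DD u (DD v H))) w ≤ 0 := by
          by_contra hc
          push Not at hc
          nlinarith
        nlinarith
    have := vanish ((h.ma.dd v).dd u) y (fun w hw => by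
      rw [coe_R (real_DD (real_DD h.real v) u), hz w hw]; simp) (fun _ => Complex.I)
    exact h.st [u, v] (by simpa using huv) (by simp [hu, hv]) (fun _ => Complex.I) (by simp) this
  have key : ∀ a b : ι, a ≠ b → a ∈ U → Pos (DD b (DD a H)) x → 0 < R (DD a H) x →
      Pos (DD a H) x := by
    intro a b hab ha hpos h0
    apply orthant_ind (fun w => 0 < R (DD a H) w) x h0
    intro w hw hw0 i t ht
    have hga := h.dd ha
    have hb := hpos w hw
    rw [R_shift hga.ma]
    by_cases hi : i = b
    · subst hi; positivity
    · have hr := hga.rayleigh hi w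
      have hb2 := hpos _ (hw.trans (le_update w i ht))
      rw [R_shift (hga.ma.dd b)] at hb2
      have h5 : 0 < (R (DD a H) w + t * R (DD i (DD a H)) w) * R (DD b (DD a H)) w := by
        nlinarith [mul_pos hw0 hb2, mul_le_mul_of_nonneg_left hr ht]
      exact pos_of_mul_pos_left h5 hb.le
  have hx := hp x le_rfl
  rw [R_add] at hx
  by_cases h0 : 0 < R (DD u H) x
  · exact Or.inl (key u v huv hu (by rw [DD_comm]; exact hh) h0)
  · exact Or.inr (key v u huv.symm hv hh (by linarith))

lemma barrier_alg {p pa pb pj pab paj pbj pabj s : ℝ} (hp : 0 < p) (hpa : 0 < pa) (hpb : 0 < pb)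
    (hpab : 0 ≤ pab) (hs : 0 ≤ s) (hsp : 2 * s * (pa + pb) ≤ p)
    (hq : ∀ t : ℝ, (p + t * pb) * (paj + t * pabj) ≤ (pa + t * pab) * (pj + t * pbj))
    (hb : p * pbj ≤ pb * pj) :
    (paj + pbj - 2 * s * pabj) * p ≤ pj * (pa + pb - 2 * s * pab) := by
  set X := pj * pab - p * pabj with hX
  set Da := pa * pj - p * paj with hDa
  set Db := pb * pj - p * pbj with hDb
  have hDa0 : 0 ≤ Da := by have := hq 0; simp at this; linarith
  have hDb0 : 0 ≤ Db := by linarith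
  have hdisc : discrim (pab * pbj - pb * pabj) (pa * pbj + pab * pj - p * pabj - pb * paj) Da ≤ 0 := by
    apply discrim_le_zero
    intro t
    have := hq t
    rw [hDa]
    nlinarith
  have hsq : (p * X - (pa * Db + pb * Da)) ^ 2 ≤ 4 * (pa * pb - p * pab) * Da * Db := by
    unfold discrim at hdisc
    have : p ^ 2 * ((pa * pbj + pab * pj - p * pabj - pb * paj) ^ 2
        - 4 * (pab * pbj - pb * pabj) * Da) ≤ 0 :=
      mul_nonpos_of_nonneg_of_nonpos (by positivity) hdisc
    have e : p ^ 2 * ((pa * pbj + pab * pj - p * pabj - pb * paj) ^ 2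
        - 4 * (pab * pbj - pb * pabj) * Da) = (p * X - (pa * Db + pb * Da)) ^ 2
          - 4 * (pa * pb - p * pab) * Da * Db := by
      rw [hX, hDa, hDb]; ring
    linarith
  have hpX : p * X ≤ (pa + pb) * (Da + Db) := by
    have h1 : (p * X - (pa * Db + pb * Da)) ^ 2 ≤ (pa * Da + pb * Db) ^ 2 := by
      have h2 : 0 ≤ p * pab * Da * Db := by positivity
      nlinarith [sq_nonneg (pa * Da - pb * Db)]
    have := abs_le_of_sq_le_sq' h1 (by positivity)
    nlinarith [this.2]
  have goal2 : 2 * s * X ≤ Da + Db := by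
    by_cases hX0 : X ≤ 0
    · nlinarith
    · push Not at hX0
      have h1 : (2 * s * X) * (pa + pb) ≤ (Da + Db) * (pa + pb) := by nlinarith
      exact le_of_mul_le_mul_right h1 (by linarith)
  rw [hX, hDa, hDb] at goal2
  nlinarith

/-- Barrier step at a point. -/
lemma Good.barrier [Fintype ι] {U : Set ι} {F : (ι → ℂ) → ℂ} (h : Good U F) {a b : ι} (hab : a ≠ b)
    (ha : a ∈ U) (hb : b ∈ U) {x y : ι → ℝ} (hp : Pos F x) (hy : x ≤ y) {s : ℝ} (hs : 0 ≤ s)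
    (hbar : 2 * s * (R (DD a F) y + R (DD b F) y) ≤ R F y) :
    0 < R (DD a F + DD b F) (update (update y a (y a - s)) b (y b - s)) ∧
    ∀ j, j ≠ a → j ≠ b →
      R (DD j (DD a F + DD b F)) (update (update y a (y a - s)) b (y b - s)) * R F y ≤
        R (DD j F) y * R (DD a F + DD b F) (update (update y a (y a - s)) b (y b - s)) := by
  have hpa := h.pos_DD hp ha
  have hpb := h.pos_DD hp hb
  have hpab := nonneg_DD (h.ma.dd b) (fun y hy => (hpb y hy).le) a
  have hF := hp y hy
  have h1 := hpa y hy
  have h2 := hpb y hy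
  have h3 := hpab y hy
  have ev : ∀ G : (ι → ℂ) → ℂ, MA G →
      R (DD a G + DD b G) (update (update y a (y a - s)) b (y b - s)) =
        R (DD a G) y + R (DD b G) y - 2 * s * R (DD a (DD b G)) y := by
    intro G hG
    have e1 : R (DD a G) (update (update y a (y a - s)) b (y b - s)) =
        R (DD a G) y - s * R (DD a (DD b G)) y := by
      rw [update_comm hab, R_DD_update, sub_eq_add_neg, R_shift (hG.dd a), DD_comm b a]
      ring
    have e2 : R (DD b G) (update (update y a (y a - s)) b (y b - s)) =
        R (DD b G) y - s * R (DD a (DD b G)) y := by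
      rw [R_DD_update, sub_eq_add_neg, R_shift (hG.dd b)]
      ring
    rw [R_add, e1, e2]; ring
  have hra := h.rayleigh hab y
  constructor
  · rw [ev F h.ma]
    have h4 : 0 < (R (DD a F) y + R (DD b F) y - 2 * s * R (DD a (DD b F)) y) * R F y := by
      have h5 : 2 * s * (R F y * R (DD a (DD b F)) y) ≤ 2 * s * (R (DD a F) y * R (DD b F) y) :=
        mul_le_mul_of_nonneg_left hra (by linarith)
      have h6 : 2 * s * R (DD a F) y ≤ R F y := by nlinarith
      have h7 := mul_le_mul_of_nonneg_right h6 h2.le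
      nlinarith [mul_pos h1 hF]
    exact pos_of_mul_pos_left h4 hF.le
  · intro j hja hjb
    rw [DD_add, DD_comm j a, DD_comm j b, ev F h.ma, ev (DD j F) (h.ma.dd j)]
    refine barrier_alg hF h1 h2 h3 hs hbar ?_ ?_
    · intro t
      have := h.rayleigh (i := a) (j := j) hja.symm (update y b (y b + t))
      rw [R_shift h.ma, R_shift (h.ma.dd a), R_shift (h.ma.dd j), R_shift ((h.ma.dd j).dd a),
        DD_comm b a, DD_comm b (a), DD_comm b j] at this
      rw [DD_comm b j]
      exact this
    · have := h.rayleigh (i := b) (j := j) hjb.symm y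
      linarith

end Abstract


section Lists

variable {α : Type*} [DecidableEq α]

noncomputable def SS (i : α) (F : (α × Bool → ℂ) → ℂ) : (α × Bool → ℂ) → ℂ :=
  DD (i, false) F + DD (i, true) F

noncomputable def TT (l : List α) (F : (α × Bool → ℂ) → ℂ) : (α × Bool → ℂ) → ℂ :=
  l.foldr SS F

lemma TT_cons (i : α) (l : List α) (F : (α × Bool → ℂ) → ℂ) :
    TT (i :: l) F = DD (i, false) (TT l F) + DD (i, true) (TT l F) := rfl

lemma TT_DD (l : List α) (a : α × Bool) (F : (α × Bool → ℂ) → ℂ) :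
    TT l (DD a F) = DD a (TT l F) := by
  induction l with
  | nil => rfl
  | cons i l ih => rw [TT_cons, ih, TT_cons, DD_add, DD_comm a, DD_comm a]

lemma good_TT {U : Set (α × Bool)} {F : (α × Bool → ℂ) → ℂ} (h : Good U F) (l : List α)
    (hl : l.Nodup) (hU : ∀ i ∈ l, ∀ c, (i, c) ∈ U) : Good (U \ {p | p.1 ∈ l}) (TT l F) := by
  induction l with
  | nil => exact h.mono (by simp)
  | cons i l ih =>
    obtain ⟨hil, hl⟩ := List.nodup_cons.1 hl
    have := ih hl (fun j hj => hU j (List.mem_cons_of_mem _ hj))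
    rw [TT_cons]
    refine (this.sum (a := (i, false)) (b := (i, true))
      ⟨hU i (by simp) _, by simpa using hil⟩ ⟨hU i (by simp) _, by simpa using hil⟩).mono ?_
    rintro ⟨j, c⟩ ⟨h1, h2⟩
    simp only [Set.mem_ofPred_eq, List.mem_cons, not_or] at h2
    refine ⟨⟨h1, h2.2⟩, ?_⟩
    simp [h2.1]

lemma select_list [Fintype α] (l : List α) (hl : l.Nodup) : ∀ {U : Set (α × Bool)}
    {F : (α × Bool → ℂ) → ℂ} (_ : Good U F) (_ : ∀ i ∈ l, ∀ c, (i, c) ∈ U)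
    {x : α × Bool → ℝ} (_ : Pos (TT l F) x),
    ∃ L : List (α × Bool), L.map Prod.fst = l ∧ Pos (iterD L F) x := by
  induction l with
  | nil => intro U F _ _ x hp; exact ⟨[], rfl, hp⟩
  | cons i l ih =>
    intro U F h hU x hp
    obtain ⟨hil, hl⟩ := List.nodup_cons.1 hl
    have hg := good_TT h l hl (fun j hj => hU j (List.mem_cons_of_mem _ hj))
    rw [TT_cons] at hp
    have main : ∃ c : Bool, Pos (DD (i, c) (TT l F)) x := by
      rcases hg.select (u := (i, false)) (v := (i, true)) (by simp)
        ⟨hU i (by simp) _, by simpa using hil⟩ ⟨hU i (by simp) _, by simpa using hil⟩ hp with h | h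
      · exact ⟨_, h⟩
      · exact ⟨_, h⟩
    obtain ⟨c, hc⟩ := main
    rw [← TT_DD] at hc
    obtain ⟨L, hL, hpos⟩ := ih hl (h.dd (hU i (by simp) c)) (by
      intro j hj d
      refine ⟨hU j (List.mem_cons_of_mem _ hj) d, ?_⟩
      have : j ≠ i := fun e => hil (e ▸ hj)
      simp [this]) hc
    refine ⟨(i, c) :: L, by simp [hL], ?_⟩
    rw [iterD_cons, ← iterD_DD]
    exact hpos

lemma barrier_list [Fintype α] {F : (α × Bool → ℂ) → ℂ} (h : Good Set.univ F) {b s : ℝ}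
    (hs : 0 ≤ s) (hp : Pos F (fun _ => b))
    (hbar : ∀ i, ∀ y : α × Bool → ℝ, (fun _ => b) ≤ y →
      2 * s * (R (DD (i, false) F) y + R (DD (i, true) F) y) ≤ R F y)
    (l : List α) (hl : l.Nodup) :
    Pos (TT l F) (fun p => if p.1 ∈ l then b - s else b) ∧
    ∀ i ∉ l, ∀ y : α × Bool → ℝ, (fun p => if p.1 ∈ l then b - s else b) ≤ y →
      2 * s * (R (DD (i, false) (TT l F)) y + R (DD (i, true) (TT l F)) y) ≤ R (TT l F) y := by
  induction l with
  | nil => exact ⟨by simpa [TT] using hp, by simpa [TT] using hbar⟩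
  | cons i l ih =>
    obtain ⟨hil, hl⟩ := List.nodup_cons.1 hl
    obtain ⟨ih1, ih2⟩ := ih hl
    have hg := good_TT h l hl (by simp)
    have key : ∀ y : α × Bool → ℝ, (fun p => if p.1 ∈ i :: l then b - s else b) ≤ y →
        ∃ w : α × Bool → ℝ, (fun p => if p.1 ∈ l then b - s else b) ≤ w ∧
          y = update (update w (i, false) (w (i, false) - s)) (i, true) (w (i, true) - s) := by
      intro y hy
      refine ⟨fun p => if p.1 = i then y p + s else y p, ?_, ?_⟩
      · rintro ⟨j, c⟩
        have := hy (j, c)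
        by_cases hj : j = i
        · subst hj
          simp [hil] at this ⊢
          linarith
        · simpa [hj] using this
      · funext ⟨j, c⟩
        by_cases hj : j = i
        · subst hj
          cases c
          · rw [update_of_ne (by simp), update_self]; simp
          · rw [update_self]; simp
        · rw [update_of_ne (by simp [hj]), update_of_ne (by simp [hj])]; simp [hj]
    have step : ∀ w : α × Bool → ℝ, (fun p => if p.1 ∈ l then b - s else b) ≤ w → _ :=
      fun w hw => hg.barrier (a := (i, false)) (b := (i, true)) (by simp)
        ⟨trivial, by simpa using hil⟩ ⟨trivial, by simpa using hil⟩ ih1 hw hs (ih2 i hil w hw)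
    rw [TT_cons]
    refine ⟨?_, ?_⟩
    · intro y hy
      obtain ⟨w, hw, rfl⟩ := key y hy
      exact (step w hw).1
    · intro j hj y hy
      simp only [List.mem_cons, not_or] at hj
      obtain ⟨w, hw, rfl⟩ := key y hy
      obtain ⟨s1, s2⟩ := step w hw
      have f1 := s2 (j, false) (by simp [hj.1]) (by simp [hj.1])
      have f2 := s2 (j, true) (by simp [hj.1]) (by simp [hj.1])
      have f3 := ih2 j hj.2 w hw
      have f4 := ih1 w hw
      have f5 := mul_le_mul_of_nonneg_right f3 s1.le
      have f6 := mul_le_mul_of_nonneg_left f1 hs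
      have f7 := mul_le_mul_of_nonneg_left f2 hs
      refine le_of_mul_le_mul_right ?_ f4
      linarith

end Lists


section Mat

variable {n : ℕ}

/-- `diag z - A` with the rows in `S` replaced by unit vectors. -/
noncomputable def MM (A : Matrix (Fin n) (Fin n) ℂ) (S : Finset (Fin n)) (z : Fin n → ℂ) :
    Matrix (Fin n) (Fin n) ℂ :=
  Matrix.of fun i j => if i ∈ S then (Pi.single i 1 : Fin n → ℂ) j
    else z i * (Pi.single i 1 : Fin n → ℂ) j - A i j

noncomputable def qq (A : Matrix (Fin n) (Fin n) ℂ) (S : Finset (Fin n)) (z : Fin n → ℂ) : ℂ :=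
  (MM A S z).det

lemma MM_empty (A : Matrix (Fin n) (Fin n) ℂ) (z : Fin n → ℂ) :
    MM A ∅ z = diagonal z - A := by
  ext i j
  by_cases h : i = j
  · subst h; simp [MM]
  · simp [MM, h, Ne.symm h]

lemma qq_update_mem (A : Matrix (Fin n) (Fin n) ℂ) {S : Finset (Fin n)} (z : Fin n → ℂ) {i : Fin n}
    (hi : i ∈ S) (t : ℂ) : qq A S (update z i t) = qq A S z := by
  unfold qq
  congr 1
  ext k j
  by_cases hk : k ∈ S
  · simp [MM, hk]
  · have : k ≠ i := fun e => hk (e ▸ hi)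
    simp [MM, hk, this]

lemma qq_update (A : Matrix (Fin n) (Fin n) ℂ) {S : Finset (Fin n)} (z : Fin n → ℂ) {i : Fin n}
    (hi : i ∉ S) (t : ℂ) :
    qq A S (update z i t) = qq A S (update z i 0) + t * qq A (insert i S) z := by
  have h1 : ∀ t : ℂ, MM A S (update z i t)
      = (MM A S z).updateRow i (t • (Pi.single i 1 : Fin n → ℂ) + (- A i)) := by
    intro t
    ext k j
    by_cases hk : k = i
    · subst hk; simp [MM, hi, sub_eq_add_neg]
    · simp [MM, hk]
  have h2 : MM A (insert i S) z = (MM A S z).updateRow i (Pi.single i 1 : Fin n → ℂ) := by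
    ext k j
    by_cases hk : k = i
    · subst hk; simp [MM]
    · simp [MM, hk]
  unfold qq
  rw [h1, h1, h2, det_updateRow_add, det_updateRow_add, det_updateRow_smul, det_updateRow_smul]
  ring

lemma qq_ne_zero {A : Matrix (Fin n) (Fin n) ℂ} (hA : A.IsHermitian) (S : Finset (Fin n))
    (z : Fin n → ℂ) (hz : ∀ i, 0 < (z i).im) : qq A S z ≠ 0 := by
  intro h0
  obtain ⟨v, hv, hMv⟩ := Matrix.exists_mulVec_eq_zero_iff.2 h0
  have hrow : ∀ i, z i * (star (v i) * v i) = star (v i) * (A *ᵥ v) i := by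
    intro i
    have h1 := congrFun hMv i
    by_cases hi : i ∈ S
    · have : v i = 0 := by
        simpa [Matrix.mulVec, dotProduct, MM, hi, Pi.single_apply] using h1
      simp [this]
    · have : z i * v i - (A *ᵥ v) i = 0 := by
        simpa [Matrix.mulVec, dotProduct, MM, hi, Pi.single_apply, sub_mul,
          Finset.sum_sub_distrib] using h1
      linear_combination star (v i) * this
  have hsum : ∑ i, z i * (star (v i) * v i) = star v ⬝ᵥ (A *ᵥ v) := by
    simp only [dotProduct, Pi.star_apply]
    exact Finset.sum_congr rfl fun i _ => hrow i
  have him : (∑ i, z i * (star (v i) * v i)).im = 0 := by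
    rw [hsum]; exact hA.im_star_dotProduct_mulVec_self v
  rw [Complex.im_sum] at him
  have hterm : ∀ i, (z i * (star (v i) * v i)).im = (z i).im * Complex.normSq (v i) := by
    intro i
    have : star (v i) * v i = (Complex.normSq (v i) : ℂ) := by
      rw [Complex.normSq_eq_conj_mul_self]; rfl
    rw [this, Complex.im_mul_ofReal]
  simp only [hterm] at him
  rw [Finset.sum_eq_zero_iff_of_nonneg
    (fun i _ => mul_nonneg (hz i).le (Complex.normSq_nonneg _))] at him
  apply hv
  funext i
  have := him i (Finset.mem_univ _)
  rcases mul_eq_zero.1 this with h | h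
  · exact absurd h (hz i).ne'
  · exact Complex.normSq_eq_zero.1 h

noncomputable def GG (A : Matrix (Fin n) (Fin n) ℂ) (S T : Finset (Fin n)) :
    (Fin n × Bool → ℂ) → ℂ :=
  fun z => qq A S (fun i => z (i, false)) * qq A T (fun i => z (i, true))

lemma upd_same {β : Type*} (z : Fin n × Bool → β) (i : Fin n) (c : Bool) (t : β) :
    (fun k => update z (i, c) t (k, c)) = update (fun k => z (k, c)) i t := by
  funext k
  by_cases hk : k = i
  · subst hk; simp
  · simp [hk]

lemma upd_diff {β : Type*} (z : Fin n × Bool → β) (i : Fin n) {c d : Bool} (h : d ≠ c) (t : β) :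
    (fun k => update z (i, c) t (k, d)) = (fun k => z (k, d)) := by
  funext k
  simp [h]

lemma DD_GG_false (A : Matrix (Fin n) (Fin n) ℂ) {S T : Finset (Fin n)} {i : Fin n} (hi : i ∉ S) :
    DD (i, false) (GG A S T) = GG A (insert i S) T := by
  funext z
  simp only [DD, GG]
  rw [upd_same, upd_same, upd_diff z i (by simp), upd_diff z i (by simp), qq_update A _ hi 1]
  ring

lemma DD_GG_true (A : Matrix (Fin n) (Fin n) ℂ) {S T : Finset (Fin n)} {i : Fin n} (hi : i ∉ T) :
    DD (i, true) (GG A S T) = GG A S (insert i T) := by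
  funext z
  simp only [DD, GG]
  rw [upd_same, upd_same, upd_diff z i (by simp), upd_diff z i (by simp), qq_update A _ hi 1]
  ring

lemma iterD_GG (A : Matrix (Fin n) (Fin n) ℂ) (l : List (Fin n × Bool)) (hl : l.Nodup) :
    iterD l (GG A ∅ ∅) = GG A (Finset.univ.filter fun i => (i, false) ∈ l)
      (Finset.univ.filter fun i => (i, true) ∈ l) := by
  induction l with
  | nil => simp [iterD]
  | cons a l ih =>
    obtain ⟨hal, hl⟩ := List.nodup_cons.1 hl
    rw [iterD_cons, ih hl]
    obtain ⟨i, c⟩ := a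
    cases c
    · rw [DD_GG_false A (by simpa using hal)]
      congr 1
      · ext k; simp
      · ext k; simp
    · rw [DD_GG_true A (by simpa using hal)]
      congr 1
      · ext k; simp
      · ext k; simp

lemma qq_continuous (A : Matrix (Fin n) (Fin n) ℂ) (S : Finset (Fin n)) : Continuous (qq A S) := by
  unfold qq
  apply Continuous.matrix_det
  refine continuous_matrix fun i j => ?_
  by_cases hi : i ∈ S
  · simp only [MM, Matrix.of_apply, hi, if_true]; exact continuous_const
  · simp only [MM, Matrix.of_apply, hi, if_false]; fun_prop

lemma qq_real {A : Matrix (Fin n) (Fin n) ℂ} (hA : A.IsHermitian) (z : Fin n → ℂ) :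
    qq A ∅ (fun i => conj (z i)) = conj (qq A ∅ z) := by
  unfold qq
  have : MM A ∅ (fun i => conj (z i)) = (MM A ∅ z)ᴴ := by
    rw [MM_empty, MM_empty, conjTranspose_sub, hA.eq, diagonal_conjTranspose]
    rfl
  rw [this, det_conjTranspose]; rfl

lemma good_GG {A : Matrix (Fin n) (Fin n) ℂ} (hA : A.IsHermitian) :
    Good Set.univ (GG A ∅ ∅) := by
  refine ⟨?_, ?_, ?_, ?_⟩
  · rintro ⟨i, c⟩ z t
    cases c
    · rw [DD_GG_false A (by simp)]
      simp only [GG]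
      rw [upd_same, upd_same, upd_diff z i (by simp), upd_diff z i (by simp),
        qq_update A _ (by simp) t]
      ring
    · rw [DD_GG_true A (by simp)]
      simp only [GG]
      rw [upd_same, upd_same, upd_diff z i (by simp), upd_diff z i (by simp),
        qq_update A _ (by simp) t]
      ring
  · unfold GG
    exact ((qq_continuous A ∅).comp (by fun_prop)).mul ((qq_continuous A ∅).comp (by fun_prop))
  · intro z
    simp only [GG]
    rw [map_mul, ← qq_real hA, ← qq_real hA]
  · intro l hl _ z hz
    rw [iterD_GG A l hl]
    exact mul_ne_zero (qq_ne_zero hA _ _ fun i => hz _) (qq_ne_zero hA _ _ fun i => hz _)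

/-- Key positive semidefiniteness estimate. -/
lemma psd_key {A : Matrix (Fin n) (Fin n) ℂ} (hA : A.PosSemidef)
    (hA1 : ((1 : Matrix (Fin n) (Fin n) ℂ) - A).PosSemidef) {δ b κ : ℝ} (hb : 1 < b) (hκ : 0 < κ)
    (hκb : κ * (δ / (b - 1) + (1 - δ) / b) ≤ 1) (i : Fin n) (hi : (A i i).re ≤ δ) :
    ((b : ℂ) • (1 : Matrix (Fin n) (Fin n) ℂ) - A
      - (κ : ℂ) • diagonal (Pi.single i 1 : Fin n → ℂ)).PosSemidef := by
  set E : Matrix (Fin n) (Fin n) ℂ := diagonal (Pi.single i 1 : Fin n → ℂ) with hE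
  set a : ℝ := (A i i).re with ha
  have haC : A i i = (a : ℂ) := by
    have := hA.diag_nonneg (i := i)
    rw [Complex.nonneg_iff] at this
    apply Complex.ext
    · simp [ha]
    · simp [← this.2]
  have hEE : E * E = E := by
    rw [hE, diagonal_mul_diagonal]; congr 1; funext k
    by_cases hk : k = i
    · subst hk; simp
    · simp [hk]
  have hEAE : E * (A * E) = (a : ℂ) • E := by
    ext k j
    rw [hE, diagonal_mul, mul_diagonal, Matrix.smul_apply, diagonal_apply]
    by_cases hk : k = i
    · subst hk
      by_cases hj : j = k
      · subst hj; simp [haC]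
      · simp [hj, Ne.symm hj]
    · simp [hk]
  have hEH : Eᴴ = E := by
    rw [hE, diagonal_conjTranspose]; congr 1; funext k
    by_cases hk : k = i
    · subst hk; simp
    · simp [hk]
  have hEp : E.PosSemidef := by
    have := posSemidef_conjTranspose_mul_self E
    rwa [hEH, hEE] at this
  have hb1 : 0 < b - 1 := by linarith
  have hb0 : 0 < b := by linarith
  have hε : 0 ≤ κ - κ ^ 2 * (a / (b - 1) + (1 - a) / b) := by
    have h1 : a / (b - 1) + (1 - a) / b ≤ δ / (b - 1) + (1 - δ) / b := by
      have : (δ - a) / b ≤ (δ - a) / (b - 1) :=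
        div_le_div_of_nonneg_left (by linarith) hb1 (by linarith)
      have e : δ / (b - 1) + (1 - δ) / b - (a / (b - 1) + (1 - a) / b)
        = (δ - a) / (b - 1) - (δ - a) / b := by ring
      linarith
    have h2 : κ * (a / (b - 1) + (1 - a) / b) ≤ 1 :=
      (mul_le_mul_of_nonneg_left h1 hκ.le).trans hκb
    nlinarith
  have p1 := (hA.conjTranspose_mul_mul_same (1 - ((κ / (b - 1) : ℝ) : ℂ) • E)).smul
    (a := ((b - 1 : ℝ) : ℂ)) (by rw [Complex.zero_le_real]; exact hb1.le)
  have p2 := (hA1.conjTranspose_mul_mul_same (1 - ((κ / b : ℝ) : ℂ) • E)).smul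
    (a := (b : ℂ)) (by rw [Complex.zero_le_real]; exact hb0.le)
  have p3 := hEp.smul (a := ((κ - κ ^ 2 * (a / (b - 1) + (1 - a) / b) : ℝ) : ℂ))
    (by rw [Complex.zero_le_real]; exact hε)
  have p4 := (p1.add p2).add p3
  convert p4 using 1
  have hs : ∀ r : ℝ, (1 - (r : ℂ) • E)ᴴ = 1 - (r : ℂ) • E := by
    intro r
    rw [conjTranspose_sub, conjTranspose_smul, hEH, conjTranspose_one]
    simp
  rw [hs, hs]
  have e1 : ((b - 1 : ℝ) : ℂ) ≠ 0 := by exact_mod_cast hb1.ne'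
  have e2 : (b : ℂ) ≠ 0 := by exact_mod_cast hb0.ne'
  simp only [sub_mul, mul_sub, smul_mul_assoc, mul_smul_comm, one_mul, mul_one, Matrix.mul_assoc,
    hEAE, hEE]
  push_cast at e1 ⊢
  match_scalars <;> field_simp <;> ring



lemma qq_pos {A : Matrix (Fin n) (Fin n) ℂ}
    (hA1 : ((1 : Matrix (Fin n) (Fin n) ℂ) - A).PosSemidef) {b : ℝ} (hb : 1 < b)
    (x : Fin n → ℝ) (hx : ∀ i, b ≤ x i) : 0 < qq A ∅ (fun i => (x i : ℂ)) := by
  unfold qq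
  rw [MM_empty]
  apply PosDef.det_pos
  have h1 : (diagonal (fun i => ((x i - 1 : ℝ) : ℂ))).PosDef := by
    apply PosDef.diagonal
    intro i
    rw [Complex.zero_lt_real]; linarith [hx i]
  have h2 : diagonal (fun i => (x i : ℂ)) - A
      = diagonal (fun i => ((x i - 1 : ℝ) : ℂ)) + (1 - A) := by
    ext i j
    by_cases h : i = j
    · subst h; simp
    · simp [h]
  rw [h2]
  exact h1.add_posSemidef hA1

lemma qq_bar {A : Matrix (Fin n) (Fin n) ℂ} {b κ : ℝ} (i : Fin n)
    (hk : ((b : ℂ) • (1 : Matrix (Fin n) (Fin n) ℂ) - A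
      - (κ : ℂ) • diagonal (Pi.single i 1 : Fin n → ℂ)).PosSemidef)
    (x : Fin n → ℝ) (hx : ∀ i, b ≤ x i) :
    0 ≤ qq A ∅ (fun i => (x i : ℂ)) - κ * qq A (insert i ∅) (fun i => (x i : ℂ)) := by
  have e : qq A ∅ (fun i => (x i : ℂ)) - κ * qq A (insert i ∅) (fun i => (x i : ℂ))
      = qq A ∅ (update (fun i => (x i : ℂ)) i ((x i : ℂ) - κ)) := by
    have h1 := qq_update A (S := ∅) (fun i => (x i : ℂ)) (i := i) (by simp) ((x i : ℂ) - κ)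
    have h2 := qq_update A (S := ∅) (fun i => (x i : ℂ)) (i := i) (by simp) (x i : ℂ)
    rw [update_eq_self i (fun i => (x i : ℂ))] at h2
    rw [h1, h2]; ring
  rw [e]
  unfold qq
  rw [MM_empty]
  apply PosSemidef.det_nonneg
  have h1 : (diagonal (fun i => ((x i - b : ℝ) : ℂ))).PosSemidef := by
    apply PosSemidef.diagonal
    intro i
    show (0 : ℂ) ≤ _
    rw [Complex.zero_le_real]; linarith [hx i]
  have h2 : diagonal (update (fun i => (x i : ℂ)) i ((x i : ℂ) - κ)) - A
      = diagonal (fun i => ((x i - b : ℝ) : ℂ)) + ((b : ℂ) • (1 : Matrix (Fin n) (Fin n) ℂ) - A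
      - (κ : ℂ) • diagonal (Pi.single i 1 : Fin n → ℂ)) := by
    ext k j
    by_cases h : k = j
    · subst h
      by_cases hki : k = i
      · subst hki; simp; ring
      · simp [hki]
    · simp [h]
  rw [h2]
  exact h1.add hk

lemma psd_block {A : Matrix (Fin n) (Fin n) ℂ} (hA : A.IsHermitian) {B : ℝ} (hB : 0 < B)
    (S : Finset (Fin n)) (hne : ∀ y : ℝ, B ≤ y → qq A S (fun _ => (y : ℂ)) ≠ 0) :
    ((B : ℂ) • (1 : Matrix (Fin n) (Fin n) ℂ) - proj Sᶜ * A * proj Sᶜ).PosSemidef := by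
  have hPH : (proj Sᶜ : Matrix (Fin n) (Fin n) ℂ)ᴴ = proj Sᶜ := by
    unfold proj
    rw [diagonal_conjTranspose]; congr 1; funext k
    by_cases hk : k ∈ Sᶜ
    · simp only [Pi.star_apply, if_pos hk, star_one]
    · simp only [Pi.star_apply, if_neg hk, star_zero]
  have hH : ((B : ℂ) • (1 : Matrix (Fin n) (Fin n) ℂ) - proj Sᶜ * A * proj Sᶜ).IsHermitian := by
    unfold Matrix.IsHermitian
    rw [conjTranspose_sub, conjTranspose_smul, conjTranspose_mul, conjTranspose_mul, hPH, hA.eq,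
      conjTranspose_one, Matrix.mul_assoc]
    simp
  rw [hH.posSemidef_iff_eigenvalues_nonneg]
  intro j
  by_contra hneg
  have hneg' : hH.eigenvalues j < 0 := not_le.1 hneg
  set μ := hH.eigenvalues j
  set v : Fin n → ℂ := (hH.eigenvectorBasis j).ofLp with hv
  have hv0 : v ≠ 0 := by
    intro h0
    have h1 := hH.eigenvectorBasis.orthonormal.ne_zero j
    apply h1
    ext k
    exact congrFun h0 k
  have hev := hH.mulVec_eigenvectorBasis j
  rw [← hv] at hev
  have hev2 : (proj Sᶜ * A * proj Sᶜ) *ᵥ v = ((B - μ : ℝ) : ℂ) • v := by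
    rw [sub_mulVec, smul_mulVec, one_mulVec] at hev
    have : (proj Sᶜ * A * proj Sᶜ) *ᵥ v = (B : ℂ) • v - hH.eigenvalues j • v := by
      rw [← hev]; simp
    rw [this]
    funext k
    simp [μ]
    ring
  have hrow : ∀ k, (if k ∈ Sᶜ then (A *ᵥ (proj Sᶜ *ᵥ v)) k else 0) = ((B - μ : ℝ) : ℂ) * v k := by
    intro k
    have := congrFun hev2 k
    rw [← mulVec_mulVec, ← mulVec_mulVec] at this
    rw [proj, mulVec_diagonal] at this
    rw [← proj] at this
    simpa using this
  have hBμ : ((B - μ : ℝ) : ℂ) ≠ 0 := by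
    have : B - μ ≠ 0 := by linarith
    exact_mod_cast this
  have hvS : ∀ k ∈ S, v k = 0 := by
    intro k hk
    have := hrow k
    simp only [Finset.mem_compl, hk, not_true_eq_false, if_false] at this
    exact (mul_eq_zero.1 this.symm).resolve_left hBμ
  have hPv : proj Sᶜ *ᵥ v = v := by
    funext k
    rw [proj, mulVec_diagonal]
    by_cases hk : k ∈ S
    · simp [hk, hvS k hk]
    · simp [hk]
  rw [hPv] at hrow
  refine hne (B - μ) (by linarith) ?_
  refine Matrix.exists_mulVec_eq_zero_iff.1 ⟨v, hv0, ?_⟩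
  funext k
  by_cases hk : k ∈ S
  · simp [Matrix.mulVec, dotProduct, MM, hk, Pi.single_apply, hvS k hk]
  · have h1 := hrow k
    simp only [Finset.mem_compl, hk, not_false_eq_true, if_true] at h1
    have : (MM A S (fun _ => ((B - μ : ℝ) : ℂ)) *ᵥ v) k = ((B - μ : ℝ) : ℂ) * v k - (A *ᵥ v) k := by
      simp [Matrix.mulVec, dotProduct, MM, hk, Pi.single_apply, sub_mul, Finset.sum_sub_distrib]
    rw [this, h1]; simp

lemma core {A : Matrix (Fin n) (Fin n) ℂ} (hA : A.PosSemidef)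
    (hA1 : ((1 : Matrix (Fin n) (Fin n) ℂ) - A).PosSemidef) {δ b κ : ℝ} (hb : 1 < b) (hκ : 0 < κ)
    (hκb : κ * (δ / (b - 1) + (1 - δ) / b) ≤ 1) (hdiag : ∀ i, (A i i).re ≤ δ)
    (hB : 0 < b - κ / 4) :
    ∃ X₁ X₂ : Finset (Fin n), Disjoint X₁ X₂ ∧ X₁ ∪ X₂ = Finset.univ ∧
      ((((b - κ / 4 : ℝ) : ℂ) • (1 : Matrix (Fin n) (Fin n) ℂ)
          - proj X₁ * A * proj X₁).PosSemidef) ∧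
      ((((b - κ / 4 : ℝ) : ℂ) • (1 : Matrix (Fin n) (Fin n) ℂ)
          - proj X₂ * A * proj X₂).PosSemidef) := by
  have hgood := good_GG hA.isHermitian
  have hpos : Pos (GG A ∅ ∅) (fun _ => b) := by
    intro y hy
    have h0 := qq_pos hA1 hb (fun i => y (i, false)) (fun i => hy _)
    have h1 := qq_pos hA1 hb (fun i => y (i, true)) (fun i => hy _)
    have := mul_pos h0 h1
    exact (Complex.pos_iff.1 this).1
  have hbar : ∀ i, ∀ y : Fin n × Bool → ℝ, (fun _ => b) ≤ y →
      2 * (κ / 4) * (R (DD (i, false) (GG A ∅ ∅)) y + R (DD (i, true) (GG A ∅ ∅)) y)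
        ≤ R (GG A ∅ ∅) y := by
    intro i y hy
    rw [DD_GG_false A (by simp), DD_GG_true A (by simp)]
    have h0 := Complex.pos_iff.1 (qq_pos hA1 hb (fun i => y (i, false)) (fun i => hy _))
    have h1 := Complex.pos_iff.1 (qq_pos hA1 hb (fun i => y (i, true)) (fun i => hy _))
    have hk := psd_key hA hA1 hb hκ hκb i (hdiag i)
    have g0 := (Complex.nonneg_iff.1 (qq_bar i hk (fun i => y (i, false)) (fun i => hy _))).1
    have g1 := (Complex.nonneg_iff.1 (qq_bar i hk (fun i => y (i, true)) (fun i => hy _))).1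
    simp only [R, GG, Complex.mul_re]
    rw [← h0.2, ← h1.2]
    rw [Complex.sub_re, Complex.re_ofReal_mul] at g0 g1
    have f0 := mul_nonneg g0 h1.1.le
    have f1 := mul_nonneg g1 h0.1.le
    nlinarith
  obtain ⟨hT, -⟩ := barrier_list hgood (s := κ / 4) (by linarith) hpos hbar
    Finset.univ.toList (Finset.nodup_toList _)
  simp only [Finset.mem_toList, Finset.mem_univ, if_true] at hT
  obtain ⟨L, hL, hLpos⟩ := select_list Finset.univ.toList (Finset.nodup_toList _) hgood (by simp) hT
  have hnd : (L.map Prod.fst).Nodup := by rw [hL]; exact Finset.nodup_toList _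
  have hLnd : L.Nodup := List.Nodup.of_map _ hnd
  rw [iterD_GG A L hLnd] at hLpos
  set S := Finset.univ.filter fun i => (i, false) ∈ L with hS
  set T := Finset.univ.filter fun i => (i, true) ∈ L with hT'
  have hTS : T = Sᶜ := by
    ext i
    simp only [hS, hT', Finset.mem_filter, Finset.mem_univ, true_and, Finset.mem_compl]
    constructor
    · intro h1 h2
      have := List.inj_on_of_nodup_map hnd h1 h2 rfl
      simp at this
    · intro h
      have hi : i ∈ L.map Prod.fst := by rw [hL]; simp
      obtain ⟨⟨k, c⟩, hkc, rfl⟩ := List.mem_map.1 hi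
      cases c
      · exact absurd hkc h
      · exact hkc
  have hne : ∀ y : ℝ, b - κ / 4 ≤ y →
      qq A S (fun _ => (y : ℂ)) * qq A T (fun _ => (y : ℂ)) ≠ 0 := by
    intro y hy h0
    have := hLpos (fun _ => y) (fun _ => hy)
    simp only [R, GG] at this
    rw [h0] at this
    simp at this
  refine ⟨Sᶜ, Tᶜ, ?_, ?_, ?_, ?_⟩
  · rw [hTS, compl_compl]; exact disjoint_compl_left
  · rw [hTS, compl_compl, Finset.union_comm]; exact Finset.union_compl S
  · exact psd_block hA.isHermitian hB S (fun y hy => left_ne_zero_of_mul (hne y hy))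
  · exact psd_block hA.isHermitian hB T (fun y hy => right_ne_zero_of_mul (hne y hy))

end Mat

end TwoPaving



/-- Any positive contraction with diagonal entries at most `δ ≤ 1/4` admits a two-paving
with both blocks having largest eigenvalue at most `(1/4)(√(3(1-δ)) + √δ)²`. -/
theorem two_paving_estimate {n : ℕ} (δ : ℝ) (hδ0 : 0 ≤ δ) (hδ1 : δ ≤ 1/4)
    (A : Matrix (Fin n) (Fin n) ℂ)
    (hA : A.PosSemidef) (hA1 : ((1 : Matrix (Fin n) (Fin n) ℂ) - A).PosSemidef)
    (hdiag : ∀ i, (A i i).re ≤ δ) :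
    ∃ X₁ X₂ : Finset (Fin n), Disjoint X₁ X₂ ∧ X₁ ∪ X₂ = Finset.univ ∧
      ((((1/4 * (Real.sqrt (3*(1-δ)) + Real.sqrt δ)^2 : ℝ) : ℂ) • (1 : Matrix (Fin n) (Fin n) ℂ)
          - proj X₁ * A * proj X₁).PosSemidef) ∧
      ((((1/4 * (Real.sqrt (3*(1-δ)) + Real.sqrt δ)^2 : ℝ) : ℂ) • (1 : Matrix (Fin n) (Fin n) ℂ)
          - proj X₂ * A * proj X₂).PosSemidef) := by
  rcases hδ0.eq_or_lt with h0 | h0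
  · -- `δ = 0`: the matrix vanishes
    subst h0
    have hA0 : A = 0 := by
      rw [← hA.trace_eq_zero_iff]
      unfold Matrix.trace
      apply Finset.sum_eq_zero
      intro i _
      have h1 := Complex.nonneg_iff.1 (hA.diag_nonneg (i := i))
      apply Complex.ext
      · exact le_antisymm (hdiag i) h1.1
      · exact h1.2.symm
    have hP : ((((1/4 * (Real.sqrt (3*(1-0)) + Real.sqrt 0)^2 : ℝ) : ℂ) •
        (1 : Matrix (Fin n) (Fin n) ℂ))).PosSemidef :=
      Matrix.PosSemidef.one.smul (by rw [Complex.zero_le_real]; positivity)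
    refine ⟨Finset.univ, ∅, by simp, by simp, ?_, ?_⟩
    · rw [hA0, Matrix.mul_zero, Matrix.zero_mul, sub_zero]; exact hP
    · rw [hA0, Matrix.mul_zero, Matrix.zero_mul, sub_zero]; exact hP
  set u := Real.sqrt (3 * (1 - δ)) with hu
  set w := Real.sqrt δ with hw
  have hu2 : u ^ 2 = 3 * (1 - δ) := Real.sq_sqrt (by linarith)
  have hw2 : w ^ 2 = δ := Real.sq_sqrt hδ0
  have hu0 : 0 < u := Real.sqrt_pos.2 (by linarith)
  have hw0 : 0 < w := Real.sqrt_pos.2 h0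
  rcases hδ1.eq_or_lt with h1 | h1
  · -- `δ = 1/4`: the bound is `1`
    have e : (1 / 4 * (u + w) ^ 2 : ℝ) = 1 := by
      have hw' : w = 1 / 2 := by nlinarith
      have hu' : u = 3 / 2 := by nlinarith
      rw [hw', hu']; norm_num
    rw [e]
    refine ⟨Finset.univ, ∅, by simp, by simp, ?_, ?_⟩
    · have : proj (Finset.univ : Finset (Fin n)) = 1 := by simp [proj]
      rw [this]; simpa using hA1
    · have : proj (∅ : Finset (Fin n)) = 0 := by simp [proj]
      rw [this]; simpa using Matrix.PosSemidef.one
  have h3 : 3 * w < u := by nlinarith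
  have hb : 1 < u * (u + w) / 3 := by nlinarith
  have hκ : 0 < (u - 3 * w) * (u + w) / 3 := by
    have : 0 < u - 3 * w := by linarith
    positivity
  have hBe : u * (u + w) / 3 - (u - 3 * w) * (u + w) / 3 / 4 = 1 / 4 * (u + w) ^ 2 := by ring
  have hκb : (u - 3 * w) * (u + w) / 3 *
      (δ / (u * (u + w) / 3 - 1) + (1 - δ) / (u * (u + w) / 3)) ≤ 1 := by
    have e1 : u * (u + w) / 3 - 1 = w * (u - 3 * w) / 3 := by linarith
    have e2 : 1 - δ = u ^ 2 / 3 := by linarith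
    have hne : u - 3 * w ≠ 0 := by linarith
    have e3 : (u - 3 * w) * (u + w) / 3 *
      (w ^ 2 / (w * (u - 3 * w) / 3) + (u ^ 2 / 3) / (u * (u + w) / 3)) = (u ^ 2 + 3 * w ^ 2) / 3 := by
      field_simp
      ring
    rw [e1, e2, ← hw2, e3]
    linarith
  have := TwoPaving.core hA hA1 hb hκ hκb hdiag (by rw [hBe]; positivity)
  rw [hBe] at this
  exact this
end

section
/- Let 0 ≤ δ ≤ 4/9 and let A be an n×n complex Hermitian matrix with 0 ⪯ A ⪯ I whose diagonal entries all satisfy A_{ii} ≤ δ. Then there exists a partition X₁ ⊔ X₂ ⊔ X₃ = {1,…,n} into three pairwise disjoint sets such that the largest eigenvalue of P_{X₁}AP_{X₁} + P_{X₂}AP_{X₂} + P_{X₃}AP_{X₃} is at most (1/9)·(√(5(1−δ)) + 2√δ)², where P_X denotes the diagonal 0-1 projection matrix onto the coordinates in X. -/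
open Polynomial Matrix
open scoped ComplexOrder

namespace Paving

open Function Topology

section ops

variable {R : Type*} [CommRing R] {σ : Type*} [DecidableEq σ]

/-- The partial derivative of a multi-affine function, as a finite difference. -/
def dd (i : σ) : ((σ → R) → R) →ₗ[R] ((σ → R) → R) where
  toFun f z := f (update z i 1) - f (update z i 0)
  map_add' f g := by ext z; simp; ring
  map_smul' c f := by ext z; simp; ring

theorem dd_apply (i : σ) (f : (σ → R) → R) (z : σ → R) :
    dd i f z = f (update z i 1) - f (update z i 0) := rfl

theorem dd_comm (i j : σ) (f : (σ → R) → R) : dd i (dd j f) = dd j (dd i f) := by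
  by_cases h : i = j
  · subst h; rfl
  · ext z
    simp only [dd_apply]
    rw [update_comm h, update_comm h, update_comm h, update_comm h]
    ring

theorem dd_update_self (i : σ) (f : (σ → R) → R) (z : σ → R) (t : R) :
    dd i f (update z i t) = dd i f z := by
  simp [dd_apply]

theorem dd_self (i : σ) (f : (σ → R) → R) : dd i (dd i f) = 0 := by
  ext z
  rw [dd_apply, dd_update_self, dd_update_self]; simp

/-- Affine in each variable. -/
def MA (f : (σ → R) → R) : Prop :=
  ∀ z i t, f (update z i t) = f (update z i 0) + t * dd i f z

theorem MA.add_eq {f : (σ → R) → R} (hf : MA f) (z : σ → R) (i : σ) (t : R) :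
    f (update z i (z i + t)) = f z + t * dd i f z := by
  have h1 := hf z i (z i + t)
  have h2 := hf z i (z i)
  rw [update_eq_self] at h2
  rw [h1, h2]; ring

theorem MA.ddm {f : (σ → R) → R} (hf : MA f) (j : σ) : MA (dd j f) := by
  intro z i t
  by_cases h : i = j
  · subst h
    rw [dd_update_self, dd_update_self, dd_self]; simp
  · rw [dd_comm i j]
    simp only [dd_apply]
    rw [update_comm h, update_comm h, update_comm h, update_comm h, hf _ i t, hf _ i t]
    simp only [dd_apply]
    ring

theorem MA.add {f g : (σ → R) → R} (hf : MA f) (hg : MA g) : MA (f + g) := by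
  intro z i t
  simp only [Pi.add_apply, map_add]
  rw [hf, hg]; ring

theorem MA.smul {f : (σ → R) → R} (hf : MA f) (c : R) : MA (c • f) := by
  intro z i t
  simp only [Pi.smul_apply, map_smul, smul_eq_mul]
  rw [hf]; ring

/-- Sum of partial derivatives over a finite set. -/
def ee (K : Finset σ) : ((σ → R) → R) →ₗ[R] ((σ → R) → R) := ∑ k ∈ K, dd k

theorem ee_apply (K : Finset σ) (f : (σ → R) → R) : ee K f = ∑ k ∈ K, dd k f := by
  simp [ee]

theorem ee_apply2 (K : Finset σ) (f : (σ → R) → R) (z) : ee K f z = ∑ k ∈ K, dd k f z := by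
  simp [ee]

theorem dd_ee (i : σ) (K : Finset σ) (f : (σ → R) → R) : dd i (ee K f) = ee K (dd i f) := by
  rw [ee_apply, ee_apply, map_sum]
  exact Finset.sum_congr rfl fun k _ => dd_comm _ _ _

theorem MA.zero : MA (0 : (σ → R) → R) := by
  intro z i t; simp

theorem MA.eem {f : (σ → R) → R} (hf : MA f) (K : Finset σ) : MA (ee K f) := by
  rw [ee_apply]
  exact Finset.sum_induction _ MA (fun _ _ h h' => h.add h') MA.zero (fun k _ => hf.ddm k)

end ops

section stable

variable {σ : Type*} [DecidableEq σ]

/-- Real inputs to complex inputs. -/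
def cx (x : σ → ℝ) : σ → ℂ := fun i => (x i : ℂ)

theorem cx_update (x : σ → ℝ) (i : σ) (t : ℝ) : cx (update x i t) = update (cx x) i (t : ℂ) := by
  ext j
  by_cases h : j = i
  · subst h; simp [cx]
  · simp [cx, h]

/-- Multi-affine real stable functions. -/
def SS (σ : Type*) [DecidableEq σ] : Set ((σ → ℂ) → ℂ) :=
  {f | MA f ∧ Continuous f ∧ (∀ x : σ → ℝ, (f (cx x)).im = 0) ∧
    ∀ z : σ → ℂ, (∀ i, 0 < (z i).im) → f z ≠ 0}

theorem dd_continuous {f : (σ → ℂ) → ℂ} (hf : Continuous f) (i : σ) : Continuous (dd i f) := by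
  have : dd i f = fun z => f (update z i 1) - f (update z i 0) := rfl
  rw [this]
  fun_prop

theorem dd_cx_im {f : (σ → ℂ) → ℂ} (hf : ∀ x : σ → ℝ, (f (cx x)).im = 0) (i : σ) (x : σ → ℝ) :
    (dd i f (cx x)).im = 0 := by
  rw [dd_apply]
  have h1 := hf (update x i 1)
  have h0 := hf (update x i 0)
  rw [cx_update] at h1 h0
  simp only [Complex.ofReal_one, Complex.ofReal_zero] at h1 h0
  rw [Complex.sub_im, h1, h0]; simp

theorem SS_im_ineq {f : (σ → ℂ) → ℂ} (hf : f ∈ SS σ) (z : σ → ℂ) (hz : ∀ i, 0 < (z i).im) (i : σ) :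
    (dd i f z = 0) ∨ (dd i f z / f z).im < 0 := by
  by_cases h : dd i f z = 0
  · exact Or.inl h
  right
  obtain ⟨hma, -, -, hst⟩ := hf
  have hfz := hst z hz
  by_contra hcon
  push Not at hcon
  set w : ℂ := - (f z / dd i f z) with hw
  have h1 := hma.add_eq z i w
  have h2 : f (update z i (z i + w)) = 0 := by
    rw [h1, hw]; field_simp; ring
  refine hst _ ?_ h2
  intro j
  by_cases hj : j = i
  · subst hj
    simp only [update_self, Complex.add_im]
    have : 0 ≤ w.im := by
      have e : w = - (dd j f z / f z)⁻¹ := by rw [hw, inv_div]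
      rw [e, Complex.neg_im, Complex.inv_im, neg_div, neg_neg]
      exact div_nonneg hcon (Complex.normSq_nonneg _)
    linarith [hz j]
  · simpa [hj] using hz j

theorem SS_ee_add {f : (σ → ℂ) → ℂ} (hf : f ∈ SS σ) (K : Finset σ) (ε : ℝ) (hε : 0 < ε) :
    ee K f + (ε : ℂ) • f ∈ SS σ := by
  have hf' := hf
  obtain ⟨hma, hc, hr, hst⟩ := hf
  refine ⟨(hma.eem K).add (hma.smul _), ?_, ?_, ?_⟩
  · refine Continuous.add ?_ (hc.const_smul _)
    rw [ee_apply]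
    have : (∑ k ∈ K, dd k f) = fun z => ∑ k ∈ K, dd k f z := by ext z; simp
    rw [this]
    exact continuous_finsetSum _ fun k _ => dd_continuous hc k
  · intro x
    simp only [Pi.add_apply, ee_apply2, Pi.smul_apply, smul_eq_mul, Complex.add_im, Complex.im_sum,
      Complex.im_ofReal_mul, hr x, mul_zero, add_zero]
    exact Finset.sum_eq_zero fun k _ => dd_cx_im hr k x
  · intro z hz h0
    have hfz := hst z hz
    have h1 : (∑ k ∈ K, dd k f z / f z) = -(ε : ℂ) := by
      simp only [Pi.add_apply, ee_apply2, Pi.smul_apply, smul_eq_mul] at h0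
      rw [← Finset.sum_div, div_eq_iff hfz]
      linear_combination h0
    have hle : ∀ k ∈ K, (dd k f z / f z).im ≤ 0 := by
      intro k _
      rcases SS_im_ineq hf' z hz k with h | h
      · simp [h]
      · exact h.le
    have h2 : ∑ k ∈ K, (dd k f z / f z).im = 0 := by
      rw [← Complex.im_sum, h1]; simp
    rw [Finset.sum_eq_zero_iff_of_nonpos hle] at h2
    have h3 : ∀ k ∈ K, dd k f z / f z = 0 := by
      intro k hk
      rcases SS_im_ineq hf' z hz k with h | h
      · simp [h]
      · exact absurd (h2 k hk) h.ne
    rw [Finset.sum_eq_zero h3] at h1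
    have : (ε : ℂ) = 0 := by linear_combination h1
    exact hε.ne' (by exact_mod_cast this)

theorem dd_cont_op (i : σ) : Continuous (fun f : (σ → ℂ) → ℂ => dd i f) := by
  refine continuous_pi fun z => ?_
  simp only [dd_apply]
  fun_prop

theorem ee_cont_op (K : Finset σ) : Continuous (fun f : (σ → ℂ) → ℂ => ee K f) := by
  simp only [ee_apply]
  exact continuous_finsetSum _ fun k _ => dd_cont_op k

theorem closure_ee {f : (σ → ℂ) → ℂ} (hf : f ∈ closure (SS σ)) (K : Finset σ) :
    ee K f ∈ closure (SS σ) := by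
  have key : ∀ g ∈ SS σ, ee K g ∈ closure (SS σ) := by
    intro g hg
    have ht : Filter.Tendsto (fun ε : ℝ => ee K g + (ε : ℂ) • g) (𝓝[>] 0) (𝓝 (ee K g)) := by
      have hc : Continuous (fun ε : ℝ => ee K g + (ε : ℂ) • g) := by fun_prop
      have := (hc.tendsto 0).mono_left (nhdsWithin_le_nhds (s := Set.Ioi 0))
      simpa using this
    refine mem_closure_of_tendsto ht ?_
    filter_upwards [self_mem_nhdsWithin] with ε hε
    exact SS_ee_add hg K ε hε
  have := map_mem_closure (ee_cont_op K) hf (t := closure (SS σ)) key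
  rwa [closure_closure] at this

theorem closure_smul {f : (σ → ℂ) → ℂ} (hf : f ∈ closure (SS σ)) (c : ℝ) (hc : c ≠ 0) :
    (c : ℂ) • f ∈ closure (SS σ) := by
  refine map_mem_closure (f := fun f : (σ → ℂ) → ℂ => (c : ℂ) • f) (by fun_prop) hf ?_
  rintro g ⟨h1, h2, h3, h4⟩
  refine ⟨h1.smul _, h2.const_smul _, ?_, ?_⟩
  · intro x; simp [h3 x]
  · intro z hz
    simp only [Pi.smul_apply, smul_eq_mul]
    exact mul_ne_zero (by exact_mod_cast hc) (h4 z hz)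

theorem closure_MA {f : (σ → ℂ) → ℂ} (hf : f ∈ closure (SS σ)) : MA f := by
  have hcl : IsClosed {f : (σ → ℂ) → ℂ | MA f} := by
    simp only [MA, Set.ofPred_forall]
    refine isClosed_iInter fun z => isClosed_iInter fun i => isClosed_iInter fun t => ?_
    refine isClosed_eq (by fun_prop) ?_
    simp only [dd_apply]
    fun_prop
  exact closure_minimal (fun g hg => hg.1) hcl hf

theorem closure_real {f : (σ → ℂ) → ℂ} (hf : f ∈ closure (SS σ)) (x : σ → ℝ) :
    (f (cx x)).im = 0 := by
  have hcl : IsClosed {f : (σ → ℂ) → ℂ | (f (cx x)).im = 0} := by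
    exact isClosed_eq (Complex.continuous_im.comp (continuous_apply _)) continuous_const
  exact closure_minimal (fun g hg => hg.2.2.1 x) hcl hf

theorem closure_im {f : (σ → ℂ) → ℂ} (hf : f ∈ closure (SS σ)) (z : σ → ℂ)
    (hz : ∀ i, 0 ≤ (z i).im) (i : σ) : 0 ≤ (f z * starRingEnd ℂ (dd i f z)).im := by
  have hcl : IsClosed {f : (σ → ℂ) → ℂ | 0 ≤ (f z * starRingEnd ℂ (dd i f z)).im} := by
    refine isClosed_le continuous_const (Complex.continuous_im.comp ?_)
    refine (continuous_apply z).mul (Complex.continuous_conj.comp ?_)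
    exact (continuous_apply z).comp (dd_cont_op i)
  refine closure_minimal ?_ hcl hf
  intro g hg
  have hopen : ∀ w : σ → ℂ, (∀ i, 0 < (w i).im) → 0 ≤ (g w * starRingEnd ℂ (dd i g w)).im := by
    intro w hw
    have hgw := hg.2.2.2 w hw
    rcases SS_im_ineq hg w hw i with h | h
    · simp [h]
    · have e : g w * starRingEnd ℂ (dd i g w)
          = (Complex.normSq (g w) : ℂ) * starRingEnd ℂ (dd i g w / g w) := by
        rw [Complex.normSq_eq_conj_mul_self, map_div₀]
        have : starRingEnd ℂ (g w) ≠ 0 := by simpa using hgw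
        field_simp
      rw [e, Complex.im_ofReal_mul, Complex.conj_im]
      exact mul_nonneg (Complex.normSq_nonneg _) (by linarith)
  have ht : Filter.Tendsto (fun ε : ℝ => (g (fun j => z j + (ε : ℂ) * Complex.I) *
      starRingEnd ℂ (dd i g (fun j => z j + (ε : ℂ) * Complex.I))).im) (𝓝[>] 0)
      (𝓝 (g z * starRingEnd ℂ (dd i g z)).im) := by
    have hgc := hg.2.1
    have hdc := dd_continuous hg.2.1 i
    have hc : Continuous (fun ε : ℝ => (g (fun j => z j + (ε : ℂ) * Complex.I) *
      starRingEnd ℂ (dd i g (fun j => z j + (ε : ℂ) * Complex.I))).im) := by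
      have hp : Continuous (fun ε : ℝ => (fun j => z j + (ε : ℂ) * Complex.I)) := by fun_prop
      exact Complex.continuous_im.comp ((hgc.comp hp).mul (Complex.continuous_conj.comp (hdc.comp hp)))
    have := (hc.tendsto 0).mono_left (nhdsWithin_le_nhds (s := Set.Ioi 0))
    simpa using this
  refine ge_of_tendsto ht ?_
  filter_upwards [self_mem_nhdsWithin] with ε hε
  apply hopen
  intro j
  have : (0 : ℝ) < ε := hε
  simp; linarith [hz j]

/-- Restriction of a complex function to the reals. -/
def rho (f : (σ → ℂ) → ℂ) : (σ → ℝ) → ℝ := fun x => (f (cx x)).re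

theorem dd_rho (f : (σ → ℂ) → ℂ) (i : σ) : dd i (rho f) = rho (dd i f) := by
  ext x
  simp [dd_apply, rho, cx_update]

theorem ee_rho (f : (σ → ℂ) → ℂ) (K : Finset σ) : ee K (rho f) = rho (ee K f) := by
  ext x
  simp [ee_apply2, dd_rho, rho]

/-- Real functions which are restrictions of limits of stable functions. -/
def Good (g : (σ → ℝ) → ℝ) : Prop := ∃ f ∈ closure (SS σ), g = rho f

theorem Good.eeg {g : (σ → ℝ) → ℝ} (hg : Good g) (K : Finset σ) : Good (ee K g) := by
  obtain ⟨f, hf, rfl⟩ := hg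
  exact ⟨_, closure_ee hf K, ee_rho f K⟩

theorem Good.ddg {g : (σ → ℝ) → ℝ} (hg : Good g) (i : σ) : Good (dd i g) := by
  have := hg.eeg {i}
  simpa [ee_apply] using this

theorem Good.smul {g : (σ → ℝ) → ℝ} (hg : Good g) (c : ℝ) (hc : c ≠ 0) : Good (c • g) := by
  obtain ⟨f, hf, rfl⟩ := hg
  refine ⟨_, closure_smul hf c hc, ?_⟩
  ext x; simp [rho]

theorem Good.ma {g : (σ → ℝ) → ℝ} (hg : Good g) : MA g := by
  obtain ⟨f, hf, rfl⟩ := hg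
  intro x i t
  rw [dd_rho]
  have := closure_MA hf (cx x) i t
  simp only [rho, cx_update, this]
  simp

theorem Good.rayleigh {g : (σ → ℝ) → ℝ} (hg : Good g) (i j : σ) (x : σ → ℝ) :
    0 ≤ dd j g x * dd i g x - g x * dd j (dd i g) x := by
  by_cases hij : i = j
  · subst hij
    rw [dd_self]; simpa using mul_self_nonneg _
  obtain ⟨f, hf, rfl⟩ := hg
  have hma := closure_MA hf
  have h := closure_im hf (update (cx x) j (cx x j + Complex.I)) (by
    intro k
    by_cases hk : k = j
    · subst hk; simp [cx]
    · simp [hk, cx]) i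
  rw [hma.add_eq, (hma.ddm i).add_eq] at h
  have r0 := closure_real hf x
  have r1 := dd_cx_im (closure_real hf) i x
  have r2 := dd_cx_im (closure_real hf) j x
  have r3 := dd_cx_im (dd_cx_im (closure_real hf) i) j x
  rw [dd_rho, dd_rho, dd_rho]
  simp only [rho]
  simp only [Complex.mul_im, Complex.add_re, Complex.add_im, Complex.mul_re, Complex.I_re,
    Complex.I_im, Complex.conj_re, Complex.conj_im, r0, r1, r2, r3] at h
  linarith

end stable

end Paving

namespace Paving

section cubic

theorem lin_vanish (c0 c1 c2 c3 : ℝ)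
    (h : ∀ τ : ℝ, 0 ≤ τ * (c0 + c1 * τ + c2 * τ ^ 2 + c3 * τ ^ 3)) : c0 = 0 := by
  have hc : Continuous (fun τ : ℝ => c0 + c1 * τ + c2 * τ ^ 2 + c3 * τ ^ 3) := by fun_prop
  have ht := hc.tendsto 0
  have e : c0 + c1 * 0 + c2 * 0 ^ 2 + c3 * 0 ^ 3 = c0 := by ring
  rw [e] at ht
  apply le_antisymm
  · refine le_of_tendsto (ht.mono_left (nhdsWithin_le_nhds (s := Set.Iio 0))) ?_
    filter_upwards [self_mem_nhdsWithin] with τ hτ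
    have hτ : τ < 0 := hτ
    by_contra hh
    push Not at hh
    nlinarith [h τ]
  · refine ge_of_tendsto (ht.mono_left (nhdsWithin_le_nhds (s := Set.Ioi 0))) ?_
    filter_upwards [self_mem_nhdsWithin] with τ hτ
    have hτ : 0 < τ := hτ
    by_contra hh
    push Not at hh
    nlinarith [h τ]

theorem sq_nonneg_lim (c0 c1 c2 c3 : ℝ)
    (h : ∀ τ : ℝ, 0 ≤ τ ^ 2 * (c0 + c1 * τ + c2 * τ ^ 2 + c3 * τ ^ 3)) : 0 ≤ c0 := by
  have hc : Continuous (fun τ : ℝ => c0 + c1 * τ + c2 * τ ^ 2 + c3 * τ ^ 3) := by fun_prop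
  have ht := hc.tendsto 0
  have e : c0 + c1 * 0 + c2 * 0 ^ 2 + c3 * 0 ^ 3 = c0 := by ring
  rw [e] at ht
  refine ge_of_tendsto (ht.mono_left (nhdsWithin_le_nhds (s := Set.Ioi 0))) ?_
  filter_upwards [self_mem_nhdsWithin] with τ hτ
  have hτ : 0 < τ := hτ
  by_contra hh
  push Not at hh
  have := mul_neg_of_pos_of_neg (pow_pos hτ 2) hh
  linarith [h τ]

/-- value of the monic cubic with roots `-d` -/
def P0 (d1 d2 d3 t : ℝ) : ℝ := (t + d1) * (t + d2) * (t + d3)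
/-- its derivative -/
def P1 (d1 d2 d3 t : ℝ) : ℝ := (t + d1) * (t + d2) + (t + d1) * (t + d3) + (t + d2) * (t + d3)
/-- its second derivative -/
def P2 (d1 d2 d3 t : ℝ) : ℝ := 2 * ((t + d1) + (t + d2) + (t + d3))
/-- general cubic -/
def Q0 (b0 b1 b2 b3 t : ℝ) : ℝ := b0 + b1 * t + b2 * t ^ 2 + b3 * t ^ 3
/-- its derivative -/
def Q1 (b1 b2 b3 t : ℝ) : ℝ := b1 + 2 * b2 * t + 3 * b3 * t ^ 2
/-- its second derivative -/
def Q2 (b2 b3 t : ℝ) : ℝ := 2 * b2 + 6 * b3 * t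

/-- partial fraction decomposition with nonnegative residues -/
def PF (d1 d2 d3 b0 b1 b2 b3 : ℝ) : Prop :=
  ∃ κ m1 m2 m3 : ℝ, 0 ≤ m1 ∧ 0 ≤ m2 ∧ 0 ≤ m3 ∧
    b0 = κ * (d1 * d2 * d3) + m1 * (d2 * d3) + m2 * (d1 * d3) + m3 * (d1 * d2) ∧
    b2 = κ * (d1 + d2 + d3) + m1 + m2 + m3 ∧ b3 = κ

theorem PF.swap12 {d1 d2 d3 b0 b1 b2 b3 : ℝ} (h : PF d1 d2 d3 b0 b1 b2 b3) :
    PF d2 d1 d3 b0 b1 b2 b3 := by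
  obtain ⟨κ, m1, m2, m3, h1, h2, h3, e0, e2, e3⟩ := h
  exact ⟨κ, m2, m1, m3, h2, h1, h3, by rw [e0]; ring, by rw [e2]; ring, e3⟩

theorem PF.swap23 {d1 d2 d3 b0 b1 b2 b3 : ℝ} (h : PF d1 d2 d3 b0 b1 b2 b3) :
    PF d1 d3 d2 b0 b1 b2 b3 := by
  obtain ⟨κ, m1, m2, m3, h1, h2, h3, e0, e2, e3⟩ := h
  exact ⟨κ, m1, m3, m2, h1, h3, h2, by rw [e0]; ring, by rw [e2]; ring, e3⟩

theorem PF_distinct (d1 d2 d3 b0 b1 b2 b3 : ℝ) (h12 : d1 ≠ d2) (h13 : d1 ≠ d3) (h23 : d2 ≠ d3)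
    (hR : ∀ t, 0 ≤ Q0 b0 b1 b2 b3 t * P1 d1 d2 d3 t - Q1 b1 b2 b3 t * P0 d1 d2 d3 t) :
    PF d1 d2 d3 b0 b1 b2 b3 := by
  have g12 : d1 - d2 ≠ 0 := sub_ne_zero.2 h12
  have g13 : d1 - d3 ≠ 0 := sub_ne_zero.2 h13
  have g23 : d2 - d3 ≠ 0 := sub_ne_zero.2 h23
  refine ⟨b3, (Q0 b0 b1 b2 b3 (-d1) * ((d1 - d2) * (d1 - d3))) / ((d1 - d2) * (d1 - d3)) ^ 2,
    (- Q0 b0 b1 b2 b3 (-d2) * ((d1 - d2) * (d2 - d3))) / ((d1 - d2) * (d2 - d3)) ^ 2,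
    (Q0 b0 b1 b2 b3 (-d3) * ((d1 - d3) * (d2 - d3))) / ((d1 - d3) * (d2 - d3)) ^ 2,
    ?_, ?_, ?_, ?_, ?_, rfl⟩
  · refine div_nonneg ?_ (sq_nonneg _)
    have := hR (-d1)
    simp only [P0, P1] at this
    linarith
  · refine div_nonneg ?_ (sq_nonneg _)
    have := hR (-d2)
    simp only [P0, P1] at this
    linarith
  · refine div_nonneg ?_ (sq_nonneg _)
    have := hR (-d3)
    simp only [P0, P1] at this
    linarith
  · simp only [Q0]; field_simp; ring
  · simp only [Q0]; field_simp; ring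

theorem PF_double (d e b0 b1 b2 b3 : ℝ) (hde : d ≠ e)
    (hR : ∀ t, 0 ≤ Q0 b0 b1 b2 b3 t * P1 d d e t - Q1 b1 b2 b3 t * P0 d d e t) :
    PF d d e b0 b1 b2 b3 := by
  have g : e - d ≠ 0 := sub_ne_zero.2 hde.symm
  -- coefficients in `τ = t + d`
  set u0 := b0 - b1 * d + b2 * d ^ 2 - b3 * d ^ 3 with hu0
  set u1 := b1 - 2 * b2 * d + 3 * b3 * d ^ 2 with hu1
  set u2 := b2 - 3 * b3 * d with hu2
  have h0 : u0 = 0 := by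
    have := lin_vanish (2 * u0 * (e - d)) (3 * u0 + u1 * (e - d)) (2 * u1) (u2 - b3 * (e - d)) (by
      intro τ
      have := hR (τ - d)
      simp only [Q0, Q1, P0, P1] at this
      rw [hu0, hu1, hu2]
      linarith)
    have h2 : u0 * (e - d) = 0 := by linarith
    exact (mul_eq_zero.1 h2).resolve_right g
  have h1 : 0 ≤ u1 * (e - d) := by
    apply sq_nonneg_lim _ (2 * u1) (u2 - b3 * (e - d)) 0
    intro τ
    have := hR (τ - d)
    have e1 : Q0 b0 b1 b2 b3 (τ - d) = u0 + u1 * τ + u2 * τ ^ 2 + b3 * τ ^ 3 := by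
      simp only [Q0, hu0, hu1, hu2]; ring
    have e2 : Q1 b1 b2 b3 (τ - d) = u1 + 2 * u2 * τ + 3 * b3 * τ ^ 2 := by
      simp only [Q1, hu1, hu2]; ring
    rw [e1, e2, h0] at this
    simp only [P0, P1] at this
    linarith
  have h3 := hR (-e)
  simp only [P0, P1] at h3
  have e3 : Q0 b0 b1 b2 b3 (-e) = u0 + u1 * (d - e) + u2 * (d - e) ^ 2 + b3 * (d - e) ^ 3 := by
    simp only [Q0, hu0, hu1, hu2]; ring
  rw [e3, h0] at h3
  refine ⟨b3, u1 * (e - d) / (e - d) ^ 2, 0,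
    ((u1 * (d - e) + u2 * (d - e) ^ 2 + b3 * (d - e) ^ 3) * (d - e) ^ 2) / (d - e) ^ 4,
    div_nonneg h1 (sq_nonneg _), le_rfl, div_nonneg (by linarith) (by positivity), ?_, ?_, rfl⟩
  · have g' : d - e ≠ 0 := sub_ne_zero.2 hde
    have eb0 : b0 = u0 + u1 * d + u2 * d ^ 2 + b3 * d ^ 3 := by simp only [hu0, hu1, hu2]; ring
    rw [eb0, h0]
    have e4 : u1 * (e - d) / (e - d) ^ 2 = u1 / (e - d) := by field_simp
    have e5 : ((u1 * (d - e) + u2 * (d - e) ^ 2 + b3 * (d - e) ^ 3) * (d - e) ^ 2) / (d - e) ^ 4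
      = - u1 / (e - d) + u2 + b3 * (d - e) := by
      have : d - e = - (e - d) := by ring
      rw [this]; field_simp
    rw [e4, e5]; field_simp; ring
  · have g' : d - e ≠ 0 := sub_ne_zero.2 hde
    have eb0 : b2 = u2 + 3 * b3 * d := by simp only [hu2]; ring
    rw [eb0]
    have e4 : u1 * (e - d) / (e - d) ^ 2 = u1 / (e - d) := by field_simp
    have e5 : ((u1 * (d - e) + u2 * (d - e) ^ 2 + b3 * (d - e) ^ 3) * (d - e) ^ 2) / (d - e) ^ 4
      = - u1 / (e - d) + u2 + b3 * (d - e) := by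
      have : d - e = - (e - d) := by ring
      rw [this]; field_simp
    rw [e4, e5]; field_simp; ring

theorem PF_triple (d b0 b1 b2 b3 : ℝ)
    (hR : ∀ t, 0 ≤ Q0 b0 b1 b2 b3 t * P1 d d d t - Q1 b1 b2 b3 t * P0 d d d t)
    (hE : ∀ ε, 0 < ε → ∀ t, 0 ≤ (Q1 b1 b2 b3 t + ε * Q0 b0 b1 b2 b3 t) * (P2 d d d t + ε * P1 d d d t)
      - (Q2 b2 b3 t + ε * Q1 b1 b2 b3 t) * (P1 d d d t + ε * P0 d d d t)) :
    PF d d d b0 b1 b2 b3 := by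
  set u0 := b0 - b1 * d + b2 * d ^ 2 - b3 * d ^ 3 with hu0
  set u1 := b1 - 2 * b2 * d + 3 * b3 * d ^ 2 with hu1
  set u2 := b2 - 3 * b3 * d with hu2
  have e1 : ∀ τ, Q0 b0 b1 b2 b3 (τ - d) = u0 + u1 * τ + u2 * τ ^ 2 + b3 * τ ^ 3 := by
    intro τ; simp only [Q0, hu0, hu1, hu2]; ring
  have e2 : ∀ τ, Q1 b1 b2 b3 (τ - d) = u1 + 2 * u2 * τ + 3 * b3 * τ ^ 2 := by
    intro τ; simp only [Q1, hu1, hu2]; ring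
  have e3 : ∀ τ, Q2 b2 b3 (τ - d) = 2 * u2 + 6 * b3 * τ := by
    intro τ; simp only [Q2, hu2]; ring
  have key : ∀ ε, 0 < ε → u1 + ε * u0 = 0 := by
    intro ε hε
    have hh := hE ε hε
    have := lin_vanish (6 * (u1 + ε * u0))
      (6 * (2 * u2 + ε * u1) + 3 * ε * (u1 + ε * u0) - 3 * (2 * u2 + ε * u1))
      (6 * (3 * b3 + ε * u2) + 3 * ε * (2 * u2 + ε * u1) - 3 * (6 * b3 + ε * 2 * u2)
        - ε * (2 * u2 + ε * u1))
      (6 * ε * b3 + 3 * ε * (3 * b3 + ε * u2) - 3 * (3 * ε * b3) - ε * (6 * b3 + ε * 2 * u2)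
        ) (by
      intro τ
      have h := hh (τ - d)
      rw [e1, e2, e3] at h
      simp only [P0, P1, P2] at h
      ring_nf at h ⊢
      linarith)
    linarith
  have k1 := key 1 one_pos
  have k2 := key 2 two_pos
  have h0 : u0 = 0 := by linarith
  have h1 : u1 = 0 := by linarith
  have h2 : 0 ≤ u2 := by
    have := hR (1 - d)
    rw [e1, e2, h0, h1] at this
    simp only [P0, P1] at this
    linarith
  refine ⟨b3, u2, 0, 0, h2, le_rfl, le_rfl, ?_, ?_, rfl⟩
  · have eb0 : b0 = u0 + u1 * d + u2 * d ^ 2 + b3 * d ^ 3 := by simp only [hu0, hu1, hu2]; ring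
    rw [eb0, h0, h1]; ring
  · simp only [hu2]; ring

theorem PF_all (d1 d2 d3 b0 b1 b2 b3 : ℝ)
    (hR : ∀ t, 0 ≤ Q0 b0 b1 b2 b3 t * P1 d1 d2 d3 t - Q1 b1 b2 b3 t * P0 d1 d2 d3 t)
    (hE : ∀ ε, 0 < ε → ∀ t, 0 ≤
      (Q1 b1 b2 b3 t + ε * Q0 b0 b1 b2 b3 t) * (P2 d1 d2 d3 t + ε * P1 d1 d2 d3 t)
      - (Q2 b2 b3 t + ε * Q1 b1 b2 b3 t) * (P1 d1 d2 d3 t + ε * P0 d1 d2 d3 t)) :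
    PF d1 d2 d3 b0 b1 b2 b3 := by
  by_cases h12 : d1 = d2
  · subst h12
    by_cases h13 : d1 = d3
    · subst h13
      exact PF_triple _ _ _ _ _ hR hE
    · exact PF_double _ _ _ _ _ _ h13 hR
  by_cases h13 : d1 = d3
  · subst h13
    apply PF.swap23
    apply PF_double _ _ _ _ _ _ h12
    intro t
    have := hR t
    simp only [P0, P1] at this ⊢
    linarith
  by_cases h23 : d2 = d3
  · subst h23
    apply PF.swap12
    apply PF.swap23
    apply PF_double _ _ _ _ _ _ (Ne.symm h12)
    intro t
    have := hR t
    simp only [P0, P1] at this ⊢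
    linarith
  exact PF_distinct _ _ _ _ _ _ _ h12 h13 h23 hR

theorem cubic_roots (a0 a1 a2 : ℝ) (h0 : 0 < a0) (h1 : 0 ≤ a1) (h2 : 0 ≤ a2)
    (hL : ∀ t : ℝ, 0 ≤ (a2 ^ 2 - 3 * a1) * t ^ 2 + (a2 * a1 - 9 * a0) * t + (a1 ^ 2 - 3 * a2 * a0)) :
    ∃ d1 d2 d3 : ℝ, 0 < d1 ∧ 0 < d2 ∧ 0 < d3 ∧ a2 = d1 + d2 + d3 ∧
      a1 = d1 * d2 + d1 * d3 + d2 * d3 ∧ a0 = d1 * d2 * d3 := by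
  have hdisc := discrim_le_zero (a := a2 ^ 2 - 3 * a1) (b := a2 * a1 - 9 * a0)
    (c := a1 ^ 2 - 3 * a2 * a0) (fun t => by have := hL t; nlinarith)
  rw [discrim] at hdisc
  -- a real root
  obtain ⟨r, hr⟩ : ∃ r : ℝ, r ^ 3 + a2 * r ^ 2 + a1 * r + a0 = 0 := by
    have hc : Continuous (fun r : ℝ => r ^ 3 + a2 * r ^ 2 + a1 * r + a0) := by fun_prop
    have := intermediate_value_Icc (a := -(1 + a0 + a1 + a2)) (b := 0) (by linarith)
      hc.continuousOn
    have hm : (0 : ℝ) ∈ Set.Icc ((-(1 + a0 + a1 + a2)) ^ 3 + a2 * (-(1 + a0 + a1 + a2)) ^ 2 +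
        a1 * (-(1 + a0 + a1 + a2)) + a0) (0 ^ 3 + a2 * 0 ^ 2 + a1 * 0 + a0) := by
      constructor
      · have hm : 1 ≤ 1 + a0 + a1 + a2 := by linarith
        set m := 1 + a0 + a1 + a2
        have : (-m) ^ 3 + a2 * (-m) ^ 2 + a1 * (-m) + a0 = - (m ^ 2 * (m - a2)) - a1 * m + a0 := by
          ring
        rw [this]
        have h3 : 1 + a0 ≤ m - a2 := by simp only [m]; linarith
        have h4 : 1 ≤ m ^ 2 := by nlinarith
        nlinarith [mul_nonneg h1 (by linarith : (0:ℝ) ≤ m)]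
      · simpa using h0.le
    obtain ⟨r, -, hr⟩ := this hm
    exact ⟨r, hr⟩
  set d1 := -r with hd1
  set β := a2 - d1 with hβ
  set γ := a1 - d1 * β with hγ
  have ha2 : a2 = d1 + β := by rw [hβ]; ring
  have ha1 : a1 = γ + d1 * β := by rw [hγ]; ring
  have ha0 : a0 = d1 * γ := by
    rw [hγ, hβ, hd1]; linarith
  have hq : 0 ≤ (β ^ 2 - 4 * γ) * (d1 ^ 2 - β * d1 + γ) ^ 2 := by
    rw [ha2, ha1, ha0] at hdisc
    nlinarith
  have hD : 0 ≤ β ^ 2 - 4 * γ := by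
    by_cases hz : d1 ^ 2 - β * d1 + γ = 0
    · nlinarith [sq_nonneg (2 * d1 - β)]
    · have : 0 < (d1 ^ 2 - β * d1 + γ) ^ 2 := by positivity
      by_contra hcon
      push Not at hcon
      nlinarith
  set s := Real.sqrt (β ^ 2 - 4 * γ) with hs
  have hss : s ^ 2 = β ^ 2 - 4 * γ := Real.sq_sqrt hD
  have hpos : ∀ d : ℝ, (-d) ^ 3 + a2 * (-d) ^ 2 + a1 * (-d) + a0 = 0 → 0 < d := by
    intro d hd
    by_contra hcon
    push Not at hcon
    have : 0 ≤ -d := by linarith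
    have h3 : 0 ≤ (-d) ^ 3 := by positivity
    have h4 : 0 ≤ a2 * (-d) ^ 2 := by positivity
    have h5 : 0 ≤ a1 * (-d) := by positivity
    linarith
  have hfac : ∀ d : ℝ, d ^ 2 - β * d + γ = 0 → 0 < d := by
    intro d hd
    apply hpos
    rw [ha2, ha1, ha0]
    linear_combination (d1 - d) * hd
  refine ⟨d1, (β + s) / 2, (β - s) / 2, ?_, ?_, ?_, ?_, ?_, ?_⟩
  · apply hpos; rw [hd1]; linarith
  · apply hfac; linear_combination hss / 4
  · apply hfac; linear_combination hss / 4
  · rw [ha2]; ring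
  · rw [ha1]; linear_combination hss / 4
  · rw [ha0]; linear_combination d1 * hss / 4

/-- The main inequality on cubics. -/
theorem cubic_main (a0 a1 a2 a3 b0 b1 b2 b3 φ : ℝ) (h0 : 0 < a0) (h1 : 0 ≤ a1) (h2 : 0 ≤ a2)
    (h3 : 0 < a3) (hφ : 0 < φ) (hb : a1 ≤ 3 * φ * a0)
    (hL : ∀ t : ℝ, 0 ≤ 2 * Q1 a1 a2 a3 t ^ 2 - 3 * Q0 a0 a1 a2 a3 t * Q2 a2 a3 t)
    (hR : ∀ t, 0 ≤ Q0 b0 b1 b2 b3 t * Q1 a1 a2 a3 t - Q1 b1 b2 b3 t * Q0 a0 a1 a2 a3 t)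
    (hE : ∀ ε, 0 < ε → ∀ t, 0 ≤
      (Q1 b1 b2 b3 t + ε * Q0 b0 b1 b2 b3 t) * (Q2 a2 a3 t + ε * Q1 a1 a2 a3 t)
      - (Q2 b2 b3 t + ε * Q1 b1 b2 b3 t) * (Q1 a1 a2 a3 t + ε * Q0 a0 a1 a2 a3 t)) :
    0 < a2 - 4 / (3 * φ) * a3 ∧
    a0 * (b2 - 4 / (3 * φ) * b3) ≤ b0 * (a2 - 4 / (3 * φ) * a3) := by
  obtain ⟨d1, d2, d3, p1, p2, p3, e2, e1, e0⟩ := cubic_roots (a0 / a3) (a1 / a3) (a2 / a3)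
    (by positivity) (by positivity) (by positivity) (by
      intro t
      have := hL t
      have e : ((a2 / a3) ^ 2 - 3 * (a1 / a3)) * t ^ 2 + (a2 / a3 * (a1 / a3) - 9 * (a0 / a3)) * t
        + ((a1 / a3) ^ 2 - 3 * (a2 / a3) * (a0 / a3))
        = (2 * Q1 a1 a2 a3 t ^ 2 - 3 * Q0 a0 a1 a2 a3 t * Q2 a2 a3 t) / (2 * a3 ^ 2) := by
        simp only [Q0, Q1, Q2]; field_simp; ring
      rw [e]; positivity)
  rw [div_eq_iff h3.ne'] at e0 e1 e2
  have q0 : ∀ t, Q0 a0 a1 a2 a3 t = a3 * P0 d1 d2 d3 t := by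
    intro t; simp only [Q0, P0, e0, e1, e2]; ring
  have q1 : ∀ t, Q1 a1 a2 a3 t = a3 * P1 d1 d2 d3 t := by
    intro t; simp only [Q1, P1, e1, e2]; ring
  have q2 : ∀ t, Q2 a2 a3 t = a3 * P2 d1 d2 d3 t := by
    intro t; simp only [Q2, P2, e2]; ring
  obtain ⟨κ, m1, m2, m3, n1, n2, n3, f0, f2, f3⟩ := PF_all d1 d2 d3 b0 b1 b2 b3 (by
      intro t
      have := hR t
      rw [q0, q1] at this
      exact nonneg_of_mul_nonneg_right (by linarith : 0 ≤ a3 * _) h3) (by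
      intro ε hε t
      have := hE ε hε t
      rw [q0, q1, q2] at this
      exact nonneg_of_mul_nonneg_right (by linarith : 0 ≤ a3 * _) h3)
  have hb' : d1 * d2 + d1 * d3 + d2 * d3 ≤ 3 * φ * (d1 * d2 * d3) := by
    rw [e0, e1] at hb
    by_contra hcon
    push Not at hcon
    nlinarith
  set s := 4 / (3 * φ) with hs
  have hsφ : s * (3 * φ) = 4 := by rw [hs]; field_simp
  have hspos : 0 < s := by positivity
  have pair : ∀ x y z : ℝ, 0 < x → 0 < y → 0 < z → x * y + x * z + y * z ≤ 3 * φ * (x * y * z) →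
      s ≤ x + y := by
    intro x y z hx hy hz h
    have h1 : (x + y) * z ≤ 3 * φ * (x * y) * z := by nlinarith [mul_pos hx hy]
    have h2 : x + y ≤ 3 * φ * (x * y) := le_of_mul_le_mul_right h1 hz
    have h3 : 4 * (x * y) ≤ (x + y) ^ 2 := by nlinarith [sq_nonneg (x - y)]
    have h4 : s * (x + y) ≤ 4 * (x * y) := by
      calc s * (x + y) ≤ s * (3 * φ * (x * y)) := by gcongr
        _ = 4 * (x * y) := by rw [← hsφ]; ring
    have h5 : s * (x + y) ≤ (x + y) * (x + y) := by nlinarith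
    exact le_of_mul_le_mul_right h5 (by linarith)
  have s12 := pair d1 d2 d3 p1 p2 p3 hb'
  have s13 := pair d1 d3 d2 p1 p3 p2 (by linarith)
  have s23 := pair d2 d3 d1 p2 p3 p1 (by linarith)
  constructor
  · rw [e2]; nlinarith
  · have key : b0 * (a2 - s * a3) - a0 * (b2 - s * b3) = a3 * (m1 * (d2 * d3 * (d2 + d3 - s)) +
      m2 * (d1 * d3 * (d1 + d3 - s)) + m3 * (d1 * d2 * (d1 + d2 - s))) := by
      rw [e0, e2, f0, f2, f3]; ring
    have : 0 ≤ a3 * (m1 * (d2 * d3 * (d2 + d3 - s)) +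
      m2 * (d1 * d3 * (d1 + d3 - s)) + m3 * (d1 * d2 * (d1 + d2 - s))) := by
      have := sub_nonneg.2 s12
      have := sub_nonneg.2 s13
      have := sub_nonneg.2 s23
      positivity
    linarith

end cubic

end Paving

namespace Paving

open Function Topology

section real

variable {σ : Type*} [DecidableEq σ]

theorem Good.ee_add {g : (σ → ℝ) → ℝ} (hg : Good g) (K : Finset σ) (ε : ℝ) (hε : 0 < ε) :
    Good (ee K g + ε • g) := by
  obtain ⟨f, hf, rfl⟩ := hg
  refine ⟨ee K f + (ε : ℂ) • f, ?_, ?_⟩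
  · refine map_mem_closure (f := fun f : (σ → ℂ) → ℂ => ee K f + (ε : ℂ) • f) ?_ hf ?_
    · exact (ee_cont_op K).add (by fun_prop)
    · intro g hg
      exact SS_ee_add hg K ε hε
  · ext x
    rw [ee_rho]
    simp [rho]

theorem Good.rayleigh_ee {g : (σ → ℝ) → ℝ} (hg : Good g) (K : Finset σ) (j : σ) (x : σ → ℝ) :
    0 ≤ dd j g x * ee K g x - g x * dd j (ee K g) x := by
  rw [ee_apply, map_sum]
  simp only [Finset.sum_apply, Finset.mul_sum]
  rw [← Finset.sum_sub_distrib]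
  exact Finset.sum_nonneg fun k _ => hg.rayleigh k j x

variable [Fintype σ]

theorem mono_orthant {Q : (σ → ℝ) → ℝ} (x : σ → ℝ)
    (h : ∀ y, x ≤ y → ∀ j t, 0 ≤ t → Q y ≤ Q (update y j (y j + t))) (y : σ → ℝ) (hy : x ≤ y) :
    Q x ≤ Q y := by
  have key : ∀ S : Finset σ, Q x ≤ Q (S.piecewise y x) := by
    intro S
    induction S using Finset.induction_on with
    | empty => simp
    | insert j S hj ih =>
      refine ih.trans ?_
      rw [Finset.piecewise_insert]
      have h1 := h (S.piecewise y x) (by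
        intro k
        by_cases hk : k ∈ S
        · simpa [hk] using hy k
        · simp [hk]) j (y j - x j) (sub_nonneg.2 (hy j))
      have h2 : S.piecewise y x j = x j := by simp [hj]
      rw [h2] at h1
      simpa using h1
  simpa using key Finset.univ

theorem ratio_mono {u v : (σ → ℝ) → ℝ} (hu : MA u) (hv : MA v) (x : σ → ℝ)
    (hpos : ∀ y, x ≤ y → 0 < v y)
    (hW : ∀ y j, 0 ≤ dd j u y * v y - u y * dd j v y) (y : σ → ℝ) (hy : x ≤ y) :
    u x / v x ≤ u y / v y := by
  refine mono_orthant (Q := fun y => u y / v y) x ?_ y hy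
  intro w hw j t ht
  have h1 := hpos w hw
  have h2 : 0 < v (update w j (w j + t)) := by
    apply hpos
    intro k
    by_cases hk : k = j
    · subst hk; simp only [update_self]; linarith [hw k]
    · simpa [hk] using hw k
  show u w / v w ≤ u (update w j (w j + t)) / v (update w j (w j + t))
  rw [div_le_div_iff₀ h1 h2, hu.add_eq, hv.add_eq]
  nlinarith [mul_nonneg ht (hW w j)]

theorem barrier_mono {g : (σ → ℝ) → ℝ} (hg : Good g) (x : σ → ℝ)
    (hpos : ∀ y, x ≤ y → 0 < g y) (K : Finset σ) (y : σ → ℝ) (hy : x ≤ y) :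
    ee K g y / g y ≤ ee K g x / g x := by
  have := ratio_mono (u := (-1 : ℝ) • ee K g) ((hg.eeg K).ma.smul _) hg.ma x hpos (by
    intro w j
    rw [map_smul]
    simp only [Pi.smul_apply, smul_eq_mul]
    linarith [hg.rayleigh_ee K j w]) y hy
  simp only [Pi.smul_apply, smul_eq_mul, neg_one_mul, neg_div] at this
  linarith

theorem exists_const_ge (y : σ → ℝ) : ∃ X : ℝ, 1 < X ∧ y ≤ fun _ => X := by
  refine ⟨2 + ∑ i, |y i|, ?_, ?_⟩
  · have : 0 ≤ ∑ i, |y i| := Finset.sum_nonneg fun i _ => abs_nonneg _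
    linarith
  · intro i
    have := Finset.single_le_sum (f := fun i => |y i|) (fun i _ => abs_nonneg _) (Finset.mem_univ i)
    linarith [le_abs_self (y i)]

theorem posE {g : (σ → ℝ) → ℝ} (hg : Good g) (x : σ → ℝ)
    (hpos : ∀ y, x ≤ y → 0 < g y) (K : Finset σ)
    (hX : ∀ X : ℝ, 1 < X → 0 < ee K g (fun _ => X)) (y : σ → ℝ) (hy : x ≤ y) : 0 < ee K g y := by
  obtain ⟨X, h1, h2⟩ := exists_const_ge y
  have h3 := barrier_mono hg y (fun w hw => hpos w (hy.trans hw)) K _ h2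
  have h4 : 0 < ee K g (fun _ => X) / g (fun _ => X) :=
    div_pos (hX X h1) (hpos _ (hy.trans h2))
  have h5 := h4.trans_le h3
  exact (div_pos_iff_of_pos_right (hpos y hy)).1 h5

/-- Positivity of all derivatives in a list of variables at large constant points. -/
def PP : List σ → ((σ → ℝ) → ℝ) → Prop
  | [], g => ∀ X : ℝ, 1 < X → 0 < g (fun _ => X)
  | v :: W, g => PP W g ∧ PP W (dd v g)

theorem PP_add (W : List σ) (f g : (σ → ℝ) → ℝ) (hf : PP W f) (hg : PP W g) : PP W (f + g) := by
  induction W generalizing f g with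
  | nil => intro X hX; exact add_pos (hf X hX) (hg X hX)
  | cons v W ih =>
    refine ⟨ih _ _ hf.1 hg.1, ?_⟩
    rw [map_add]
    exact ih _ _ hf.2 hg.2

theorem PP_pos (W : List σ) (f : (σ → ℝ) → ℝ) (hf : PP W f) (X : ℝ) (hX : 1 < X) :
    0 < f (fun _ => X) := by
  induction W generalizing f with
  | nil => exact hf X hX
  | cons v W ih => exact ih _ hf.1

end real

section triple

variable {ι : Type*} [DecidableEq ι]

/-- derivative along the triple of variables -/
def E (i : ι) : ((ι × Fin 3 → ℝ) → ℝ) →ₗ[ℝ] ((ι × Fin 3 → ℝ) → ℝ) :=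
  ee {(i, 0), (i, 1), (i, 2)}

/-- selecting part `k` for index `i` -/
def C (i : ι) (k : Fin 3) : ((ι × Fin 3 → ℝ) → ℝ) →ₗ[ℝ] ((ι × Fin 3 → ℝ) → ℝ) :=
  dd (i, k + 1) ∘ₗ dd (i, k + 2)

/-- sum over the three selections -/
def T (i : ι) : ((ι × Fin 3 → ℝ) → ℝ) →ₗ[ℝ] ((ι × Fin 3 → ℝ) → ℝ) :=
  C i 0 + C i 1 + C i 2

/-- full derivative -/
def H (i : ι) : ((ι × Fin 3 → ℝ) → ℝ) →ₗ[ℝ] ((ι × Fin 3 → ℝ) → ℝ) :=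
  dd (i, 0) ∘ₗ dd (i, 1) ∘ₗ dd (i, 2)

theorem E_eq (i : ι) (g : (ι × Fin 3 → ℝ) → ℝ) :
    E i g = dd (i, 0) g + dd (i, 1) g + dd (i, 2) g := by
  rw [E, ee_apply, Finset.sum_insert (by simp), Finset.sum_insert (by simp), Finset.sum_singleton]
  abel

theorem T_eq (i : ι) (g : (ι × Fin 3 → ℝ) → ℝ) :
    T i g = dd (i, 1) (dd (i, 2) g) + dd (i, 0) (dd (i, 2) g) + dd (i, 0) (dd (i, 1) g) := by
  have e1 : T i g = dd (i, 1) (dd (i, 2) g) + dd (i, 2) (dd (i, 0) g) + dd (i, 0) (dd (i, 1) g) :=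
    rfl
  rw [e1, dd_comm (i, 2) (i, 0)]

theorem EE_eq (i : ι) (g : (ι × Fin 3 → ℝ) → ℝ) : E i (E i g) = (2 : ℝ) • T i g := by
  simp only [E_eq, T_eq, map_add, dd_self]
  rw [dd_comm (i, 1) (i, 0), dd_comm (i, 2) (i, 0), dd_comm (i, 2) (i, 1)]
  module

theorem ET_eq (i : ι) (g : (ι × Fin 3 → ℝ) → ℝ) : E i (T i g) = (3 : ℝ) • H i g := by
  simp only [E_eq, T_eq, map_add, dd_self]
  have e0 : H i g = dd (i, 0) (dd (i, 1) (dd (i, 2) g)) := rfl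
  rw [e0, dd_comm (i, 1) (i, 0), dd_comm (i, 1) (i, 0), dd_comm (i, 2) (i, 0), dd_comm (i, 2) (i, 0),
    dd_comm (i, 2) (i, 1), dd_comm (i, 2) (i, 1), dd_self, dd_self]
  simp only [dd_self, map_zero]
  module

theorem EH_eq (i : ι) (g : (ι × Fin 3 → ℝ) → ℝ) : E i (H i g) = 0 := by
  have e0 : H i g = dd (i, 0) (dd (i, 1) (dd (i, 2) g)) := rfl
  rw [e0, E_eq, dd_self, dd_comm (i, 1) (i, 0), dd_self, dd_comm (i, 2) (i, 0),
    dd_comm (i, 2) (i, 1), dd_self]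
  simp

theorem dd_E (j : ι × Fin 3) (i : ι) (g) : dd j (E i g) = E i (dd j g) := dd_ee _ _ _

theorem dd_C (j : ι × Fin 3) (i : ι) (k) (g) : dd j (C i k g) = C i k (dd j g) := by
  simp only [C, LinearMap.comp_apply]
  rw [dd_comm j, dd_comm j]

theorem dd_T (j : ι × Fin 3) (i : ι) (g) : dd j (T i g) = T i (dd j g) := by
  simp only [T, LinearMap.add_apply, map_add, dd_C]

theorem dd_H (j : ι × Fin 3) (i : ι) (g) : dd j (H i g) = H i (dd j g) := by
  simp only [H, LinearMap.comp_apply]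
  rw [dd_comm j, dd_comm j, dd_comm j]

theorem ddk_C (i : ι) (k : Fin 3) (g) : dd (i, k) (C i k g) = H i g := by
  have e0 : H i g = dd (i, 0) (dd (i, 1) (dd (i, 2) g)) := rfl
  rw [e0]
  fin_cases k
  · rfl
  · show dd (i, 1) (dd (i, 2) (dd (i, 0) g)) = _
    rw [dd_comm (i, 2) (i, 0), dd_comm (i, 1) (i, 0)]
  · show dd (i, 2) (dd (i, 0) (dd (i, 1) g)) = _
    rw [dd_comm (i, 2) (i, 0), dd_comm (i, 2) (i, 1)]

theorem dd0_T (i : ι) (g) : dd (i, 0) (T i g) = H i g := by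
  rw [T_eq, map_add, map_add, dd_self, dd_self]
  simp [H]

theorem Good.Eg {g : (ι × Fin 3 → ℝ) → ℝ} (hg : Good g) (i : ι) : Good (E i g) := hg.eeg _

theorem Good.Cg {g : (ι × Fin 3 → ℝ) → ℝ} (hg : Good g) (i : ι) (k : Fin 3) : Good (C i k g) :=
  (hg.ddg _).ddg _

theorem Good.Hg {g : (ι × Fin 3 → ℝ) → ℝ} (hg : Good g) (i : ι) : Good (H i g) :=
  ((hg.ddg _).ddg _).ddg _

theorem Good.Tg {g : (ι × Fin 3 → ℝ) → ℝ} (hg : Good g) (i : ι) : Good (T i g) := by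
  have := ((hg.Eg i).Eg i).smul (1 / 2) (by norm_num)
  rw [EE_eq, smul_smul] at this
  norm_num at this
  exact this

/-- shift a triple of coordinates -/
def shift (i : ι) (t : ℝ) (z : ι × Fin 3 → ℝ) : ι × Fin 3 → ℝ :=
  fun p => if p.1 = i then z p + t else z p

theorem shift_eq (i : ι) (t : ℝ) (z : ι × Fin 3 → ℝ) :
    shift i t z = update (update (update z (i, 0) (z (i, 0) + t)) (i, 1) (z (i, 1) + t))
      (i, 2) (z (i, 2) + t) := by
  ext ⟨j, k⟩
  by_cases h : j = i
  · subst h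
    fin_cases k <;> simp [shift, update_apply]
  · simp [shift, h]

theorem shift_eval {g : (ι × Fin 3 → ℝ) → ℝ} (hg : MA g) (i : ι) (t : ℝ) (z : ι × Fin 3 → ℝ) :
    g (shift i t z) = g z + t * E i g z + t ^ 2 * T i g z + t ^ 3 * H i g z := by
  rw [shift_eq]
  set z1 := update z (i, 0) (z (i, 0) + t) with hz1
  set z2 := update z1 (i, 1) (z (i, 1) + t) with hz2
  have e2 : z (i, 2) = z2 (i, 2) := by simp [hz1, hz2]
  have e1 : z (i, 1) = z1 (i, 1) := by simp [hz1]
  rw [e2, hg.add_eq, hz2, e1, hg.add_eq, (hg.ddm _).add_eq, hz1, hg.add_eq, (hg.ddm _).add_eq,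
    (hg.ddm _).add_eq, ((hg.ddm _).ddm _).add_eq, E_eq, T_eq]
  simp only [H, LinearMap.comp_apply, Pi.add_apply]
  ring

theorem H_shift {g : (ι × Fin 3 → ℝ) → ℝ} (hg : Good g) (i : ι) (t : ℝ) (z : ι × Fin 3 → ℝ) :
    T i g (shift i t z) = T i g z + 3 * t * H i g z := by
  rw [shift_eval (hg.Tg i).ma]
  have h1 : T i (T i g) = 0 := by
    have : (2 : ℝ) • T i (T i g) = 0 := by
      rw [← EE_eq, ET_eq, map_smul, EH_eq, smul_zero]
    simpa using this
  have h2 : H i (T i g) = 0 := by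
    have e0 : H i (T i g) = dd (i, 1) (dd (i, 2) (dd (i, 0) (T i g))) := by
      show dd (i, 0) (dd (i, 1) (dd (i, 2) (T i g))) = _
      rw [dd_comm (i, 2) (i, 0), dd_comm (i, 1) (i, 0)]
    rw [e0, dd0_T]
    simp only [H, LinearMap.comp_apply]
    rw [dd_comm (i, 2) (i, 0), dd_comm (i, 2) (i, 1), dd_self]
    simp
  rw [h1, h2, ET_eq]
  simp; ring

theorem shift_Q0 {g : (ι × Fin 3 → ℝ) → ℝ} (hg : Good g) (i : ι) (t : ℝ) (z : ι × Fin 3 → ℝ) :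
    g (shift i t z) = Q0 (g z) (E i g z) (T i g z) (H i g z) t := by
  rw [shift_eval hg.ma, Q0]; ring

theorem shift_Q1 {g : (ι × Fin 3 → ℝ) → ℝ} (hg : Good g) (i : ι) (t : ℝ) (z : ι × Fin 3 → ℝ) :
    E i g (shift i t z) = Q1 (E i g z) (T i g z) (H i g z) t := by
  rw [shift_eval (hg.Eg i).ma]
  have h1 : T i (E i g) = (3 : ℝ) • H i g := by
    rw [← ET_eq, E_eq, E_eq, map_add, map_add, dd_T, dd_T, dd_T]
  have h2 : H i (E i g) = 0 := by
    rw [← EH_eq i g, E_eq, E_eq, map_add, map_add, dd_H, dd_H, dd_H]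
  rw [EE_eq, h1, h2]
  simp [Q1]; ring

theorem shift_Q2 {g : (ι × Fin 3 → ℝ) → ℝ} (hg : Good g) (i : ι) (t : ℝ) (z : ι × Fin 3 → ℝ) :
    E i (E i g) (shift i t z) = Q2 (T i g z) (H i g z) t := by
  rw [EE_eq]
  simp only [Pi.smul_apply, smul_eq_mul]
  rw [H_shift hg, Q2]; ring

theorem laguerre {g : (ι × Fin 3 → ℝ) → ℝ} (hg : Good g) (i : ι) (x : ι × Fin 3 → ℝ) :
    0 ≤ 2 * E i g x ^ 2 - 3 * g x * E i (E i g) x := by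
  rw [EE_eq, T_eq, E_eq]
  have h1 := hg.rayleigh (i, 2) (i, 1) x
  have h2 := hg.rayleigh (i, 2) (i, 0) x
  have h3 := hg.rayleigh (i, 1) (i, 0) x
  simp only [Pi.add_apply, Pi.smul_apply, smul_eq_mul]
  nlinarith [sq_nonneg (dd (i, 0) g x - dd (i, 1) g x), sq_nonneg (dd (i, 0) g x - dd (i, 2) g x),
    sq_nonneg (dd (i, 1) g x - dd (i, 2) g x)]

/-- The list of variables over a list of indices. -/
def vars : List ι → List (ι × Fin 3)
  | [] => []
  | i :: L => (i, 0) :: (i, 1) :: (i, 2) :: vars L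

variable [Fintype ι]

theorem PP_step (W : List (ι × Fin 3)) (i : ι) (g)
    (h : PP ((i, 0) :: (i, 1) :: (i, 2) :: W) g) :
    PP W (E i g) ∧ (∀ k, PP W (C i k g)) ∧ PP W (T i g) ∧ PP W (H i g) := by
  obtain ⟨⟨⟨h000, h001⟩, ⟨h010, h011⟩⟩, ⟨⟨h100, h101⟩, ⟨h110, h111⟩⟩⟩ := h
  rw [dd_comm (i, 2) (i, 1)] at h011
  rw [dd_comm (i, 1) (i, 0)] at h110
  rw [dd_comm (i, 2) (i, 1), dd_comm (i, 2) (i, 0), dd_comm (i, 1) (i, 0)] at h111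
  refine ⟨?_, ?_, ?_, h111⟩
  · rw [E_eq]
    exact PP_add _ _ _ (PP_add _ _ _ h100 h010) h001
  · intro k
    fin_cases k
    · exact h011
    · exact h101
    · exact h110
  · rw [T_eq]
    rw [dd_comm (i, 2) (i, 0)] at h101
    exact PP_add _ _ _ (PP_add _ _ _ h011 h101) h110

theorem barrier_step {g : (ι × Fin 3 → ℝ) → ℝ} (hg : Good g) (W : List (ι × Fin 3)) (i : ι)
    (hPP : PP ((i, 0) :: (i, 1) :: (i, 2) :: W) g) (z : ι × Fin 3 → ℝ)
    (hpos : ∀ y, z ≤ y → 0 < g y) (φ : ℝ) (hφ : 0 < φ) (hb : E i g z ≤ 3 * φ * g z) :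
    (∀ y, shift i (-(4 / (9 * φ))) z ≤ y → 0 < T i g y) ∧
    ∀ j, dd j g z ≤ φ * g z → dd j (T i g) (shift i (-(4 / (9 * φ))) z)
      ≤ φ * T i g (shift i (-(4 / (9 * φ))) z) := by
  obtain ⟨pE, -, pT, pH⟩ := PP_step W i g hPP
  have hE : ∀ y, z ≤ y → 0 < E i g y :=
    posE hg z hpos _ (PP_pos W _ pE)
  have hEE : ∀ y, z ≤ y → 0 < E i (E i g) y := by
    refine posE (hg.Eg i) z hE _ ?_
    intro X hX
    show 0 < E i (E i g) _
    rw [EE_eq]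
    exact mul_pos two_pos (PP_pos W _ pT X hX)
  have hT : ∀ y, z ≤ y → 0 < T i g y := by
    intro y hy
    have := hEE y hy
    rw [EE_eq] at this
    simpa using this
  have hH : ∀ y, z ≤ y → 0 < H i g y := by
    intro y hy
    have h3 : 0 < E i (T i g) y := by
      refine posE (hg.Tg i) z hT _ ?_ y hy
      intro X hX
      show 0 < E i (T i g) _
      rw [ET_eq]
      exact mul_pos three_pos (PP_pos W _ pH X hX)
    rw [ET_eq] at h3
    simpa using h3
  have hL : ∀ w, ∀ t : ℝ, 0 ≤ 2 * Q1 (E i g w) (T i g w) (H i g w) t ^ 2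
      - 3 * Q0 (g w) (E i g w) (T i g w) (H i g w) t * Q2 (T i g w) (H i g w) t := by
    intro w t
    rw [← shift_Q0 hg, ← shift_Q1 hg, ← shift_Q2 hg]
    exact laguerre hg i _
  have ec : 3 * (4 / (9 * φ)) = 4 / (3 * φ) := by field_simp; ring
  have eT : ∀ w, ∀ f, Good f → T i f (shift i (-(4 / (9 * φ))) w)
      = T i f w - 4 / (3 * φ) * H i f w := by
    intro w f hf
    rw [H_shift hf, ← ec]; ring
  constructor
  · intro y hy
    set w := shift i (4 / (9 * φ)) y with hw
    have hzw : z ≤ w := by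
      intro p
      have := hy p
      by_cases hp : p.1 = i
      · simp only [shift, hp, if_true, hw] at this ⊢; linarith
      · simpa only [shift, hp, if_false, hw] using this
    have hyw : y = shift i (-(4 / (9 * φ))) w := by
      ext p
      by_cases hp : p.1 = i
      · simp [shift, hp, hw]
      · simp [shift, hp, hw]
    rw [hyw, eT w g hg]
    have hbw : E i g w ≤ 3 * φ * g w := by
      have h1 : E i g w / g w ≤ E i g z / g z := barrier_mono hg z hpos _ w hzw
      have h2 : E i g z / g z ≤ 3 * φ := (div_le_iff₀ (hpos z le_rfl)).2 hb
      exact (div_le_iff₀ (hpos w hzw)).1 (h1.trans h2)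
    exact (cubic_main (g w) (E i g w) (T i g w) (H i g w) 0 0 0 0 φ (hpos w hzw) (hE w hzw).le
      (hT w hzw).le (hH w hzw) hφ hbw (hL w) (by intro t; simp [Q0, Q1])
      (by intro ε _ t; simp [Q0, Q1, Q2])).1
  · intro j hj
    rw [dd_T, eT z g hg, eT z _ (hg.ddg j)]
    have hz := le_refl z
    obtain ⟨hp, hm⟩ := cubic_main (g z) (E i g z) (T i g z) (H i g z) (dd j g z) (E i (dd j g) z)
      (T i (dd j g) z) (H i (dd j g) z) φ (hpos z hz) (hE z hz).le
      (hT z hz).le (hH z hz) hφ hb (hL z) (by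
        intro t
        rw [← shift_Q0 hg, ← shift_Q1 hg, ← shift_Q0 (hg.ddg j), ← shift_Q1 (hg.ddg j), ← dd_E]
        have := hg.rayleigh_ee {(i, 0), (i, 1), (i, 2)} j (shift i t z)
        rw [mul_comm (dd j (E i g) _)]
        exact this) (by
        intro ε hε t
        rw [← shift_Q0 hg, ← shift_Q1 hg, ← shift_Q2 hg, ← shift_Q0 (hg.ddg j),
          ← shift_Q1 (hg.ddg j), ← shift_Q2 (hg.ddg j), ← dd_E, ← dd_E]
        have hg' : Good (E i g + ε • g) := hg.ee_add _ ε hε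
        have h := hg'.rayleigh_ee {(i, 0), (i, 1), (i, 2)} j (shift i t z)
        have h' : 0 ≤ dd j (E i g + ε • g) (shift i t z) * E i (E i g + ε • g) (shift i t z)
          - (E i g + ε • g) (shift i t z) * dd j (E i (E i g + ε • g)) (shift i t z) := h
        simp only [map_add, map_smul, Pi.add_apply, Pi.smul_apply, smul_eq_mul] at h'
        linarith)
    have h1 : g z * (T i (dd j g) z - 4 / (3 * φ) * H i (dd j g) z)
      ≤ g z * (φ * (T i g z - 4 / (3 * φ) * H i g z)) := by
      refine hm.trans ?_
      have := mul_le_mul_of_nonneg_right hj hp.le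
      linarith
    exact le_of_mul_le_mul_left h1 (hpos z hz)

/-- apply all `T` -/
def Tall : List ι → (((ι × Fin 3 → ℝ) → ℝ) →ₗ[ℝ] ((ι × Fin 3 → ℝ) → ℝ))
  | [] => LinearMap.id
  | i :: L => Tall L ∘ₗ T i

/-- apply all selections -/
def Call (s : ι → Fin 3) : List ι → (((ι × Fin 3 → ℝ) → ℝ) →ₗ[ℝ] ((ι × Fin 3 → ℝ) → ℝ))
  | [] => LinearMap.id
  | i :: L => Call s L ∘ₗ C i (s i)

theorem barrier_all (φ : ℝ) (hφ : 0 < φ) (L : List ι) (hL : L.Nodup) (g : (ι × Fin 3 → ℝ) → ℝ)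
    (hg : Good g) (hPP : PP (vars L) g) (z : ι × Fin 3 → ℝ) (hpos : ∀ y, z ≤ y → 0 < g y)
    (hb : ∀ i ∈ L, ∀ k, dd (i, k) g z ≤ φ * g z) :
    ∀ y, (fun p : ι × Fin 3 => if p.1 ∈ L then z p - 4 / (9 * φ) else z p) ≤ y →
      0 < Tall L g y := by
  induction L generalizing g z with
  | nil =>
    intro y hy
    apply hpos
    simpa using hy
  | cons i L ih =>
    intro y hy
    rw [List.nodup_cons] at hL
    have hbi : E i g z ≤ 3 * φ * g z := by
      have h0 := hb i (by simp) 0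
      have h1 := hb i (by simp) 1
      have h2 := hb i (by simp) 2
      rw [E_eq]; simp only [Pi.add_apply]; linarith
    obtain ⟨s1, s2⟩ := barrier_step hg (vars L) i hPP z hpos φ hφ hbi
    refine ih hL.2 (T i g) (hg.Tg i) (PP_step _ _ _ hPP).2.2.1 (shift i (-(4 / (9 * φ))) z) s1
      (fun j hj k => s2 _ (hb j (by simp [hj]) k)) y ?_
    refine le_trans (le_of_eq ?_) hy
    ext p
    by_cases hp : p.1 = i
    · have : p.1 ∉ L := by rw [hp]; exact hL.1
      simp [shift, hp, hL.1]; ring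
    · simp [shift, hp]

theorem dd_Tall (j : ι × Fin 3) (L : List ι) (g) : dd j (Tall L g) = Tall L (dd j g) := by
  induction L generalizing g with
  | nil => rfl
  | cons i L ih =>
    simp only [Tall, LinearMap.comp_apply]
    rw [ih, dd_T]

theorem Good.Tallg (L : List ι) {g : (ι × Fin 3 → ℝ) → ℝ} (hg : Good g) : Good (Tall L g) := by
  induction L generalizing g with
  | nil => exact hg
  | cons i L ih => exact ih (hg.Tg i)

theorem PP_Tall (L : List ι) (g : (ι × Fin 3 → ℝ) → ℝ) (h : PP (vars L) g) (X : ℝ) (hX : 1 < X) :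
    0 < Tall L g (fun _ => X) := by
  induction L generalizing g with
  | nil => exact h X hX
  | cons i L ih => exact ih _ (PP_step _ _ _ h).2.2.1

theorem Call_congr (s s' : ι → Fin 3) (L : List ι) (h : ∀ i ∈ L, s i = s' i) :
    Call s L = Call s' L := by
  induction L with
  | nil => rfl
  | cons i L ih =>
    simp only [Call]
    rw [ih (fun j hj => h j (by simp [hj])), h i (by simp)]

theorem interlace (x : ι × Fin 3 → ℝ) (L : List ι) (hL : L.Nodup) (g : (ι × Fin 3 → ℝ) → ℝ)
    (hg : Good g) (hPP : PP (vars L) g) (hpos : ∀ y, x ≤ y → 0 < Tall L g y) :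
    ∃ s : ι → Fin 3, ∀ y, x ≤ y → 0 < Call s L g y := by
  induction L generalizing g with
  | nil => exact ⟨fun _ => 0, hpos⟩
  | cons i L ih =>
    rw [List.nodup_cons] at hL
    obtain ⟨-, pC, -, pH⟩ := PP_step _ _ _ hPP
    set h := Tall L (H i g) with hh
    -- `h` is positive
    have hhpos : ∀ y, x ≤ y → 0 < h y := by
      intro y hy
      have e : ee {(i, (0 : Fin 3))} (Tall (i :: L) g) = h := by
        simp only [Tall, ee_apply, Finset.sum_singleton, LinearMap.comp_apply]
        rw [dd_Tall, dd0_T]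
      have := posE (hg.Tallg (i :: L)) x hpos {(i, (0 : Fin 3))} (by
        intro X hX
        rw [e]
        exact PP_Tall L _ pH X hX) y hy
      rwa [e] at this
    have hsum : Tall (i :: L) g x
        = Tall L (C i 0 g) x + Tall L (C i 1 g) x + Tall L (C i 2 g) x := by
      simp only [Tall, LinearMap.comp_apply, T, LinearMap.add_apply, map_add, Pi.add_apply]
    obtain ⟨k, hk⟩ : ∃ k, 0 < Tall L (C i k g) x := by
      by_contra hcon
      push Not at hcon
      have := hpos x le_rfl
      rw [hsum] at this
      linarith [hcon 0, hcon 1, hcon 2]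
    have hkpos : ∀ y, x ≤ y → 0 < Tall L (C i k g) y := by
      intro y hy
      have hG := (hg.Cg i k).Tallg L
      have hD : dd (i, k) (Tall L (C i k g)) = h := by rw [dd_Tall, ddk_C]
      have := ratio_mono (u := Tall L (C i k g)) (v := h) hG.ma ((hg.Hg i).Tallg L).ma x hhpos (by
        intro w j
        have := hG.rayleigh (i, k) j w
        rw [hD] at this
        exact this) y hy
      have h1 : 0 < Tall L (C i k g) x / h x := div_pos hk (hhpos x le_rfl)
      exact (div_pos_iff_of_pos_right (hhpos y hy)).1 (h1.trans_le this)
    obtain ⟨s, hs⟩ := ih hL.2 (C i k g) (hg.Cg i k) (pC k) hkpos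
    refine ⟨update s i k, ?_⟩
    intro y hy
    simp only [Call, LinearMap.comp_apply, update_self]
    rw [Call_congr (update s i k) s L]
    · exact hs y hy
    · intro j hj
      rw [update_of_ne]
      rintro rfl
      exact hL.1 hj

end triple

end Paving

namespace Paving

open Function Topology

section mats

variable {n : ℕ}

/-- `diag x - A` with the rows in `S` replaced by the rows of the identity. -/
def mat (A : Matrix (Fin n) (Fin n) ℂ) (S : Finset (Fin n)) (x : Fin n → ℂ) :
    Matrix (Fin n) (Fin n) ℂ :=
  Matrix.of fun i j => if i ∈ S then (1 : Matrix (Fin n) (Fin n) ℂ) i j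
    else (Matrix.diagonal x - A) i j

/-- its determinant -/
def gS (A : Matrix (Fin n) (Fin n) ℂ) (S : Finset (Fin n)) (x : Fin n → ℂ) : ℂ := (mat A S x).det

theorem mat_update (A : Matrix (Fin n) (Fin n) ℂ) (S : Finset (Fin n)) (x : Fin n → ℂ) (i : Fin n)
    (hi : i ∉ S) (t : ℂ) : mat A S (update x i t) =
      (mat A S x).updateRow i (t • (1 : Matrix (Fin n) (Fin n) ℂ) i + - A i) := by
  ext a c
  by_cases h : a = i
  · subst h
    by_cases hc : a = c
    · subst hc
      simp [mat, hi, sub_eq_add_neg]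
    · simp [mat, hi, Matrix.diagonal_apply_ne _ hc, Matrix.one_apply_ne hc]
  · rw [Matrix.updateRow_ne h]
    by_cases hc : a = c
    · subst hc
      simp [mat, h]
    · simp [mat, Matrix.diagonal_apply_ne _ hc]

theorem mat_insert (A : Matrix (Fin n) (Fin n) ℂ) (S : Finset (Fin n)) (x : Fin n → ℂ) (i : Fin n) :
    mat A (insert i S) x = (mat A S x).updateRow i ((1 : Matrix (Fin n) (Fin n) ℂ) i) := by
  ext a c
  by_cases h : a = i
  · subst h
    simp [mat]
  · rw [Matrix.updateRow_ne h]
    simp [mat, h]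

theorem gS_update (A : Matrix (Fin n) (Fin n) ℂ) (S : Finset (Fin n)) (x : Fin n → ℂ) (i : Fin n)
    (hi : i ∉ S) (t : ℂ) :
    gS A S (update x i t) = gS A S (update x i 0) + t * gS A (insert i S) x := by
  simp only [gS]
  rw [mat_update A S x i hi t, mat_update A S x i hi 0, mat_insert, Matrix.det_updateRow_add,
    Matrix.det_updateRow_smul, zero_smul, zero_add]
  ring

/-- the slice of a set of variables -/
def slice (S : Finset (Fin n × Fin 3)) (k : Fin 3) : Finset (Fin n) :=
  Finset.univ.filter fun i => (i, k) ∈ S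

theorem mem_slice (S : Finset (Fin n × Fin 3)) (k : Fin 3) (i : Fin n) :
    i ∈ slice S k ↔ (i, k) ∈ S := by simp [slice]

/-- The product of three determinants. -/
def FS (A : Matrix (Fin n) (Fin n) ℂ) (S : Finset (Fin n × Fin 3)) (z : Fin n × Fin 3 → ℂ) : ℂ :=
  ∏ k : Fin 3, gS A (slice S k) (fun i => z (i, k))

theorem FS_update (A : Matrix (Fin n) (Fin n) ℂ) (S : Finset (Fin n × Fin 3))
    (z : Fin n × Fin 3 → ℂ) (i : Fin n) (k : Fin 3) (hi : (i, k) ∉ S) (t : ℂ) :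
    FS A S (update z (i, k) t) = FS A S (update z (i, k) 0) + t * FS A (insert (i, k) S) z := by
  have key : ∀ (S' : Finset (Fin n × Fin 3)) (z' : Fin n × Fin 3 → ℂ),
      FS A S' z' = gS A (slice S' k) (fun i => z' (i, k)) *
        ∏ j ∈ Finset.univ.erase k, gS A (slice S' j) (fun i => z' (i, j)) := fun S' z' =>
    (Finset.mul_prod_erase Finset.univ
      (fun j => gS A (slice S' j) (fun i => z' (i, j))) (Finset.mem_univ k)).symm
  have h1 : ∀ t, (fun a => update z (i, k) t (a, k)) = update (fun a => z (a, k)) i t := by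
    intro t
    ext a
    by_cases h : a = i
    · subst h; simp
    · rw [update_of_ne h, update_of_ne (by simpa using h)]
  have h2 : ∀ t, ∏ j ∈ Finset.univ.erase k, gS A (slice S j) (fun a => update z (i, k) t (a, j)) =
      ∏ j ∈ Finset.univ.erase k, gS A (slice S j) (fun a => z (a, j)) := by
    intro t
    apply Finset.prod_congr rfl
    intro j hj
    have hj := Finset.ne_of_mem_erase hj
    congr 1
    ext a
    rw [update_of_ne]
    simp [hj]
  have h3 : ∏ j ∈ Finset.univ.erase k, gS A (slice (insert (i, k) S) j) (fun a => z (a, j)) =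
      ∏ j ∈ Finset.univ.erase k, gS A (slice S j) (fun a => z (a, j)) := by
    apply Finset.prod_congr rfl
    intro j hj
    have hj := Finset.ne_of_mem_erase hj
    congr 1
    ext a
    simp [mem_slice, hj]
  have h4 : slice (insert (i, k) S) k = insert i (slice S k) := by
    ext a
    simp [mem_slice]
  rw [key, key, key (insert (i, k) S), h1, h1, h2, h2, h3, h4,
    gS_update A _ _ i (by rwa [mem_slice]) t]
  ring

theorem dd_FS (A : Matrix (Fin n) (Fin n) ℂ) (S : Finset (Fin n × Fin 3))
    (p : Fin n × Fin 3) (hi : p ∉ S) : dd p (FS A S) = FS A (insert p S) := by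
  ext z
  obtain ⟨i, k⟩ := p
  rw [dd_apply, FS_update A S z i k hi 1]
  ring

theorem continuous_gS (A : Matrix (Fin n) (Fin n) ℂ) (S : Finset (Fin n)) :
    Continuous (gS A S) := by
  unfold gS
  apply Continuous.matrix_det
  refine continuous_matrix fun i j => ?_
  by_cases h : i ∈ S
  · simp only [mat, Matrix.of_apply, h, if_true]
    exact continuous_const
  · simp only [mat, Matrix.of_apply, h, if_false, Matrix.sub_apply]
    by_cases hc : i = j
    · subst hc
      simp only [Matrix.diagonal_apply_eq]
      fun_prop
    · simp only [Matrix.diagonal_apply_ne _ hc]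
      fun_prop

theorem mat_empty (A : Matrix (Fin n) (Fin n) ℂ) (x : Fin n → ℂ) :
    mat A ∅ x = Matrix.diagonal x - A := by
  ext i j; simp [mat]

theorem gS_empty_im (A : Matrix (Fin n) (Fin n) ℂ) (hA : A.IsHermitian) (x : Fin n → ℝ) :
    (gS A ∅ (cx x)).im = 0 := by
  rw [gS, mat_empty]
  have hM : (Matrix.diagonal (cx x) - A).IsHermitian := by
    apply Matrix.IsHermitian.sub _ hA
    apply Matrix.isHermitian_diagonal_of_self_adjoint
    ext i
    simp [cx]
  have := Matrix.det_conjTranspose (Matrix.diagonal (cx x) - A)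
  rw [hM.eq] at this
  exact Complex.conj_eq_iff_im.mp this.symm

theorem gS_empty_ne (A : Matrix (Fin n) (Fin n) ℂ) (hA : A.IsHermitian) (x : Fin n → ℂ)
    (hx : ∀ i, 0 < (x i).im) : gS A ∅ x ≠ 0 := by
  rw [gS, mat_empty]
  intro h
  obtain ⟨v, hv, hv0⟩ := Matrix.exists_mulVec_eq_zero_iff.mpr h
  have h1 : star v ⬝ᵥ ((Matrix.diagonal x - A) *ᵥ v) = 0 := by rw [hv0]; simp
  rw [Matrix.sub_mulVec, dotProduct_sub] at h1
  have h2 : (star v ⬝ᵥ (A *ᵥ v)).im = 0 := by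
    have := hA.im_star_dotProduct_mulVec_self v
    simpa using this
  have h3 := congrArg Complex.im h1
  rw [Complex.sub_im, h2] at h3
  have h4 : (star v ⬝ᵥ (Matrix.diagonal x *ᵥ v)).im = ∑ i, (x i).im * Complex.normSq (v i) := by
    rw [dotProduct, Complex.im_sum]
    apply Finset.sum_congr rfl
    intro i _
    simp [Matrix.mulVec_diagonal, Complex.normSq_apply]
    ring
  rw [h4] at h3
  obtain ⟨i, hi⟩ := Function.ne_iff.mp hv
  have : 0 < ∑ i, (x i).im * Complex.normSq (v i) := by
    apply Finset.sum_pos'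
    · intro i _
      exact mul_nonneg (hx i).le (Complex.normSq_nonneg _)
    · exact ⟨i, Finset.mem_univ _, mul_pos (hx i) (Complex.normSq_pos.mpr hi)⟩
  simp at h3
  linarith

theorem slice_empty (k : Fin 3) : slice (∅ : Finset (Fin n × Fin 3)) k = ∅ := by
  ext a; simp [mem_slice]

theorem FS_mem (A : Matrix (Fin n) (Fin n) ℂ) (hA : A.IsHermitian) :
    FS A ∅ ∈ SS (Fin n × Fin 3) := by
  refine ⟨?_, ?_, ?_, ?_⟩
  · intro z p t
    obtain ⟨i, k⟩ := p
    rw [dd_FS A ∅ (i, k) (by simp)]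
    exact FS_update A ∅ z i k (by simp) t
  · unfold FS
    refine continuous_finsetProd _ fun k _ => ?_
    exact (continuous_gS A _).comp (by fun_prop)
  · intro x
    rw [← Complex.conj_eq_iff_im, FS, map_prod]
    apply Finset.prod_congr rfl
    intro k _
    rw [Complex.conj_eq_iff_im, slice_empty]
    exact gS_empty_im A hA fun i => x (i, k)
  · intro z hz
    rw [FS, Finset.prod_ne_zero_iff]
    intro k _
    rw [slice_empty]
    exact gS_empty_ne A hA _ fun i => hz _

theorem posDef_of_gt (A : Matrix (Fin n) (Fin n) ℂ)
    (hA1 : ((1 : Matrix (Fin n) (Fin n) ℂ) - A).PosSemidef) (x : Fin n → ℝ) (hx : ∀ i, 1 < x i) :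
    (Matrix.diagonal (cx x) - A).PosDef := by
  have h : Matrix.diagonal (cx x) - A = Matrix.diagonal (fun i => ((x i - 1 : ℝ) : ℂ)) + (1 - A) := by
    rw [← Matrix.diagonal_one, ← add_sub_assoc, Matrix.diagonal_add]
    congr 2
    ext i
    simp [cx]
  rw [h]
  refine Matrix.PosDef.add_posSemidef (Matrix.PosDef.diagonal ?_) hA1
  intro i
  have := hx i
  exact_mod_cast sub_pos.mpr this

theorem gS_pos (A : Matrix (Fin n) (Fin n) ℂ)
    (hA1 : ((1 : Matrix (Fin n) (Fin n) ℂ) - A).PosSemidef) (S : Finset (Fin n))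
    (x : Fin n → ℝ) (hx : ∀ i, 1 < x i) : 0 < gS A S (cx x) := by
  rw [gS, Matrix.twoBlockTriangular_det _ (fun i => i ∉ S)]
  · have h1 : (Matrix.toSquareBlockProp (mat A S (cx x)) fun i => ¬ i ∉ S) = 1 := by
      ext ⟨i, hi⟩ ⟨j, hj⟩
      simp [Matrix.toSquareBlockProp, mat, not_not.mp hi, Matrix.one_apply]
    have h2 : (Matrix.toSquareBlockProp (mat A S (cx x)) fun i => ¬ i ∈ S) =
        (Matrix.diagonal (cx x) - A).submatrix Subtype.val Subtype.val := by
      ext ⟨i, hi⟩ ⟨j, hj⟩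
      simp [Matrix.toSquareBlockProp, mat, hi]
    rw [h1, h2, Matrix.det_one, mul_one]
    exact ((posDef_of_gt A hA1 x hx).submatrix Subtype.val_injective).det_pos
  · intro i hi j hj
    rw [not_not] at hi
    have : i ≠ j := by rintro rfl; exact hj hi
    simp [mat, hi, Matrix.one_apply_ne this]

theorem FS_pos (A : Matrix (Fin n) (Fin n) ℂ)
    (hA1 : ((1 : Matrix (Fin n) (Fin n) ℂ) - A).PosSemidef) (S : Finset (Fin n × Fin 3))
    (x : Fin n × Fin 3 → ℝ) (hx : ∀ i, 1 < x i) : 0 < FS A S (cx x) := by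
  rw [FS]
  exact Finset.prod_pos fun k _ => gS_pos A hA1 _ (fun i => x (i, k)) fun i => hx _

theorem rho_FS_pos (A : Matrix (Fin n) (Fin n) ℂ)
    (hA1 : ((1 : Matrix (Fin n) (Fin n) ℂ) - A).PosSemidef) (S : Finset (Fin n × Fin 3))
    (x : Fin n × Fin 3 → ℝ) (hx : ∀ i, 1 < x i) : 0 < rho (FS A S) x :=
  (Complex.pos_iff.mp (FS_pos A hA1 S x hx)).1

theorem PP_FS (A : Matrix (Fin n) (Fin n) ℂ)
    (hA1 : ((1 : Matrix (Fin n) (Fin n) ℂ) - A).PosSemidef) (W : List (Fin n × Fin 3))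
    (hW : W.Nodup) (S : Finset (Fin n × Fin 3)) (hS : ∀ p ∈ W, p ∉ S) : PP W (rho (FS A S)) := by
  induction W generalizing S with
  | nil => exact fun X hX => rho_FS_pos A hA1 S _ fun _ => hX
  | cons p W ih =>
    rw [List.nodup_cons] at hW
    refine ⟨ih hW.2 S fun q hq => hS q (List.mem_cons_of_mem _ hq), ?_⟩
    rw [dd_rho, dd_FS A S p (hS p List.mem_cons_self)]
    refine ih hW.2 _ fun q hq => ?_
    rw [Finset.mem_insert, not_or]
    exact ⟨fun h => hW.1 (h ▸ hq), hS q (List.mem_cons_of_mem _ hq)⟩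

theorem mem_vars (L : List (Fin n)) (p : Fin n × Fin 3) : p ∈ vars L ↔ p.1 ∈ L := by
  obtain ⟨i, k⟩ := p
  induction L with
  | nil => simp [vars]
  | cons a L ih =>
    simp only [vars, List.mem_cons, ih, Prod.mk.injEq]
    fin_cases k <;> simp

theorem nodup_vars (L : List (Fin n)) (hL : L.Nodup) : (vars L).Nodup := by
  induction L with
  | nil => simp [vars]
  | cons a L ih =>
    rw [List.nodup_cons] at hL
    simp [vars, mem_vars, hL.1, ih hL.2]

theorem Call_FS (A : Matrix (Fin n) (Fin n) ℂ) (s : Fin n → Fin 3) (L : List (Fin n))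
    (hL : L.Nodup) (S : Finset (Fin n × Fin 3)) (hS : ∀ p ∈ S, p.1 ∉ L) :
    Call s L (rho (FS A S)) =
      rho (FS A (S ∪ Finset.univ.filter fun p => p.1 ∈ L ∧ p.2 ≠ s p.1)) := by
  induction L generalizing S with
  | nil => simp [Call]
  | cons i L ih =>
    rw [List.nodup_cons] at hL
    have hn : ∀ k, (i, k) ∉ S := fun k h => hS _ h List.mem_cons_self
    have h1 : C i (s i) (rho (FS A S)) = rho (FS A (insert (i, s i + 1) (insert (i, s i + 2) S))) := by
      simp only [C, LinearMap.comp_apply]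
      rw [dd_rho, dd_FS A S _ (hn _), dd_rho, dd_FS]
      simp [hn]
    simp only [Call, LinearMap.comp_apply]
    rw [h1, ih hL.2]
    · congr 2
      ext ⟨a, k⟩
      simp only [Finset.mem_union, Finset.mem_insert, Finset.mem_filter, Finset.mem_univ, true_and,
        List.mem_cons, Prod.mk.injEq]
      by_cases ha : a = i
      · subst ha
        have h3 : ∀ c k : Fin 3, (k = c + 1 ∨ k = c + 2) ↔ k ≠ c := by decide
        have := h3 (s a) k
        simp [hL.1, hn, this]
      · simp [ha]
    · intro p hp
      simp only [Finset.mem_insert] at hp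
      rcases hp with rfl | rfl | hp
      · exact hL.1
      · exact hL.1
      · exact fun h => hS p hp (List.mem_cons_of_mem _ h)

end mats

end Paving

namespace Paving

open Function Topology

section final

variable {n : ℕ}

theorem resolvent_bound (A : Matrix (Fin n) (Fin n) ℂ) (hA : A.PosSemidef)
    (hA1 : ((1 : Matrix (Fin n) (Fin n) ℂ) - A).PosSemidef) (δ b : ℝ) (hb : 1 < b)
    (hdiag : ∀ i, (A i i).re ≤ δ) (i : Fin n) (M : Matrix (Fin n) (Fin n) ℂ)
    (hM : M = (b : ℂ) • (1 : Matrix (Fin n) (Fin n) ℂ) - A) (hMp : M.PosDef) :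
    (M⁻¹ i i).re ≤ (b - 1 + δ) / (b * (b - 1)) := by
  have hb0 : (0 : ℂ) ≤ ((b - 1 : ℝ) : ℂ) := by exact_mod_cast (by linarith : (0 : ℝ) ≤ b - 1)
  have hu : IsUnit M.det := (Matrix.isUnit_iff_isUnit_det M).mp hMp.isUnit
  have p1 : (A * (1 - A) * A).PosSemidef := by
    have := hA1.conjTranspose_mul_mul_same A
    rwa [hA.isHermitian.eq] at this
  have p2 : ((1 - A) * A * (1 - A)).PosSemidef := by
    have := hA.conjTranspose_mul_mul_same (1 - A)
    rwa [hA1.isHermitian.eq] at this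
  have p3 : (A * (1 - A)).PosSemidef := by
    have : A * (1 - A) = A * (1 - A) * A + (1 - A) * A * (1 - A) := by noncomm_ring
    rw [this]
    exact p1.add p2
  have p4 : (((b - 1 : ℝ) : ℂ) • (A * (1 - A)) + (1 - A) * A * (1 - A)).PosSemidef :=
    (p3.smul hb0).add p2
  have p5 := p4.conjTranspose_mul_mul_same M⁻¹
  rw [hMp.inv.isHermitian.eq] at p5
  have e1 : ((b - 1 : ℝ) : ℂ) • (A * (1 - A)) + (1 - A) * A * (1 - A) =
      M * (((b - 1 : ℝ) : ℂ) • (1 : Matrix (Fin n) (Fin n) ℂ) + A) * M -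
        ((b * (b - 1) : ℝ) : ℂ) • M := by
    rw [hM]
    simp only [sub_mul, mul_sub, add_mul, mul_add, smul_mul_assoc, mul_smul_comm, one_mul, mul_one,
      smul_sub, smul_add, smul_smul]
    push_cast
    simp only [mul_assoc]
    module
  rw [e1, Matrix.mul_sub, Matrix.sub_mul] at p5
  have e2 : M⁻¹ * (M * (((b - 1 : ℝ) : ℂ) • (1 : Matrix (Fin n) (Fin n) ℂ) + A) * M) * M⁻¹ =
      ((b - 1 : ℝ) : ℂ) • (1 : Matrix (Fin n) (Fin n) ℂ) + A := by
    rw [Matrix.mul_assoc M, Matrix.nonsing_inv_mul_cancel_left _ _ hu,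
      Matrix.mul_nonsing_inv_cancel_right _ _ hu]
  have e3 : M⁻¹ * (((b * (b - 1) : ℝ) : ℂ) • M) * M⁻¹ = ((b * (b - 1) : ℝ) : ℂ) • M⁻¹ := by
    rw [mul_smul_comm, Matrix.nonsing_inv_mul _ hu, smul_mul_assoc, Matrix.one_mul]
  rw [e2, e3] at p5
  have p6 := (Complex.nonneg_iff.mp (p5.diag_nonneg (i := i))).1
  simp only [Matrix.sub_apply, Matrix.add_apply, Matrix.smul_apply, Matrix.one_apply_eq,
    smul_eq_mul, mul_one, Complex.sub_re, Complex.add_re, Complex.ofReal_re,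
    Complex.re_ofReal_mul] at p6
  rw [le_div_iff₀ (by nlinarith)]
  linarith [hdiag i]

theorem gS_single (A : Matrix (Fin n) (Fin n) ℂ) (x : Fin n → ℂ) (i : Fin n)
    (hu : IsUnit (Matrix.diagonal x - A).det) :
    gS A {i} x = (Matrix.diagonal x - A)⁻¹ i i * gS A ∅ x := by
  have h1 : gS A {i} x = (Matrix.diagonal x - A).adjugate i i := by
    rw [gS, ← insert_empty_eq, mat_insert, mat_empty, Matrix.adjugate_apply]
    congr 2
    ext j
    simp [Matrix.one_apply, Pi.single_apply, eq_comm]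
  rw [h1, gS, mat_empty, Matrix.inv_def, Matrix.smul_apply, smul_eq_mul, mul_assoc, mul_comm,
    mul_assoc, Ring.mul_inverse_cancel _ hu, mul_one]

theorem barrier_init (A : Matrix (Fin n) (Fin n) ℂ) (hA : A.PosSemidef)
    (hA1 : ((1 : Matrix (Fin n) (Fin n) ℂ) - A).PosSemidef) (δ b : ℝ) (hb : 1 < b)
    (hdiag : ∀ i, (A i i).re ≤ δ) (i : Fin n) (k : Fin 3) :
    dd (i, k) (rho (FS A ∅)) (fun _ => b) ≤
      (b - 1 + δ) / (b * (b - 1)) * rho (FS A ∅) (fun _ => b) := by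
  have hMp := posDef_of_gt A hA1 (fun _ => b) fun _ => hb
  have hu := (Matrix.isUnit_iff_isUnit_det _).mp hMp.isUnit
  have hr := resolvent_bound A hA hA1 δ b hb hdiag i _ (by
    congr 1
    ext a c
    simp [Matrix.diagonal_apply, Matrix.one_apply, cx]) hMp
  rw [dd_rho, dd_FS A ∅ _ (by simp)]
  have e : FS A (insert (i, k) ∅) (cx fun _ => b) =
      (Matrix.diagonal (cx fun _ : Fin n => b) - A)⁻¹ i i * FS A ∅ (cx fun _ => b) := by
    have key : ∀ (S' : Finset (Fin n × Fin 3)) (z' : Fin n × Fin 3 → ℂ),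
      FS A S' z' = gS A (slice S' k) (fun i => z' (i, k)) *
        ∏ j ∈ Finset.univ.erase k, gS A (slice S' j) (fun i => z' (i, j)) := fun S' z' =>
      (Finset.mul_prod_erase Finset.univ
        (fun j => gS A (slice S' j) (fun i => z' (i, j))) (Finset.mem_univ k)).symm
    rw [key, key ∅, ← mul_assoc]
    congr 1
    · have : slice (insert (i, k) ∅) k = {i} := by
        ext a
        simp [mem_slice]
      rw [this, slice_empty]
      exact gS_single A _ i hu
    · apply Finset.prod_congr rfl
      intro j hj
      have hj := Finset.ne_of_mem_erase hj
      congr 1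
      ext a
      simp [mem_slice, hj]
  have hF := Complex.pos_iff.mp (FS_pos A hA1 ∅ (fun _ => b) fun _ => hb)
  simp only [rho]
  rw [e, Complex.mul_re, ← hF.2, mul_zero, sub_zero]
  exact mul_le_mul_of_nonneg_right hr hF.1.le

theorem paving_core (A : Matrix (Fin n) (Fin n) ℂ) (hA : A.PosSemidef)
    (hA1 : ((1 : Matrix (Fin n) (Fin n) ℂ) - A).PosSemidef) (δ b : ℝ) (hδ : 0 ≤ δ) (hb : 1 < b)
    (hdiag : ∀ i, (A i i).re ≤ δ) (l : ℝ) (hl : b - 4 / (9 * ((b - 1 + δ) / (b * (b - 1)))) ≤ l) :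
    ∃ s : Fin n → Fin 3, ∀ μ : ℝ, l ≤ μ → ∀ k,
      gS A (Finset.univ.filter fun i => k ≠ s i) (fun _ => (μ : ℂ)) ≠ 0 := by
  have hφ : 0 < (b - 1 + δ) / (b * (b - 1)) :=
    div_pos (by linarith) (mul_pos (by linarith) (by linarith))
  have hg : Good (rho (FS A ∅)) := ⟨_, subset_closure (FS_mem A hA.isHermitian), rfl⟩
  have hL := List.nodup_finRange n
  have hPP : PP (vars (List.finRange n)) (rho (FS A ∅)) :=
    PP_FS A hA1 _ (nodup_vars _ hL) _ (by simp)
  have h1 := barrier_all _ hφ (List.finRange n) hL _ hg hPP (fun _ => b)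
    (fun y hy => rho_FS_pos A hA1 _ y fun i => lt_of_lt_of_le hb (hy i))
    (fun i _ k => barrier_init A hA hA1 δ b hb hdiag i k)
  obtain ⟨s, hs⟩ := interlace _ _ hL _ hg hPP h1
  refine ⟨s, fun μ hμ k => ?_⟩
  have h2 := hs (fun _ => μ) (by
    intro p
    simp only [List.mem_finRange, if_true]
    linarith)
  rw [Call_FS A s _ hL ∅ (by simp)] at h2
  have h3 : FS A (∅ ∪ Finset.univ.filter fun p => p.1 ∈ List.finRange n ∧ p.2 ≠ s p.1)
      (cx fun _ => μ) ≠ 0 := by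
    intro h
    simp only [rho] at h2
    rw [h] at h2
    simp at h2
  rw [FS, Finset.prod_ne_zero_iff] at h3
  have h4 := h3 k (Finset.mem_univ _)
  have h5 : slice (∅ ∪ Finset.univ.filter fun p : Fin n × Fin 3 =>
      p.1 ∈ List.finRange n ∧ p.2 ≠ s p.1) k = Finset.univ.filter fun i => k ≠ s i := by
    ext a
    simp [mem_slice]
  rw [h5] at h4
  exact h4

theorem proj_herm (X : Finset (Fin n)) : (proj X)ᴴ = proj X := by
  rw [proj, Matrix.diagonal_conjTranspose]
  congr 1
  ext i
  simp only [Pi.star_apply]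
  split_ifs <;> simp

theorem proj_mulVec (X : Finset (Fin n)) (v : Fin n → ℂ) (i : Fin n) :
    (proj X *ᵥ v) i = if i ∈ X then v i else 0 := by
  rw [proj, Matrix.mulVec_diagonal]
  split_ifs <;> simp

theorem paving_psd (A : Matrix (Fin n) (Fin n) ℂ) (hA : A.IsHermitian) (l : ℝ) (s : Fin n → Fin 3)
    (hs : ∀ μ : ℝ, l ≤ μ → ∀ k,
      gS A (Finset.univ.filter fun i => k ≠ s i) (fun _ => (μ : ℂ)) ≠ 0)
    (X : Fin 3 → Finset (Fin n)) (hX : ∀ k, X k = Finset.univ.filter fun i => k = s i) :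
    ((l : ℂ) • (1 : Matrix (Fin n) (Fin n) ℂ) - (proj (X 0) * A * proj (X 0) +
      proj (X 1) * A * proj (X 1) + proj (X 2) * A * proj (X 2))).PosSemidef := by
  have hB : ∀ k, (proj (X k) * A * proj (X k)).IsHermitian := by
    intro k
    have := Matrix.isHermitian_mul_mul_conjTranspose (proj (X k)) hA
    rwa [proj_herm] at this
  set B := proj (X 0) * A * proj (X 0) + proj (X 1) * A * proj (X 1) + proj (X 2) * A * proj (X 2)
    with hBdef
  have hM : ((l : ℂ) • (1 : Matrix (Fin n) (Fin n) ℂ) - B).IsHermitian := by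
    refine Matrix.IsHermitian.sub ?_ (((hB 0).add (hB 1)).add (hB 2))
    simp [Matrix.IsHermitian, Matrix.conjTranspose_smul]
  rw [hM.posSemidef_iff_eigenvalues_nonneg]
  intro j
  by_contra hneg
  simp only [Pi.zero_apply, not_le] at hneg
  set ν := hM.eigenvalues j with hν
  set v : Fin n → ℂ := ⇑(hM.eigenvectorBasis j) with hv
  have hv0 : v ≠ 0 := by
    intro h
    have := hM.eigenvectorBasis.orthonormal.ne_zero j
    apply this
    ext i
    exact congrFun h i
  have hev := hM.mulVec_eigenvectorBasis j
  have hBv : ∀ i, (B *ᵥ v) i = ((l - ν : ℝ) : ℂ) * v i := by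
    intro i
    have := congrFun hev i
    rw [Matrix.sub_mulVec, Matrix.smul_mulVec, Matrix.one_mulVec] at this
    simp only [Pi.sub_apply, Pi.smul_apply, smul_eq_mul, Complex.real_smul] at this
    push_cast
    linear_combination -this
  obtain ⟨i₀, hi₀⟩ := Function.ne_iff.mp hv0
  set k := s i₀ with hk
  apply hs (l - ν) (by linarith) k
  rw [gS, ← Matrix.exists_mulVec_eq_zero_iff]
  refine ⟨proj (X k) *ᵥ v, ?_, ?_⟩
  · intro h
    have := congrFun h i₀
    rw [proj_mulVec, hX, if_pos (by simp [hk])] at this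
    exact hi₀ this
  · ext i
    by_cases hi : k = s i
    · have e1 : (B *ᵥ v) i = (A *ᵥ (proj (X k) *ᵥ v)) i := by
        have e2 : ∀ m, ((proj (X m) * A * proj (X m)) *ᵥ v) i =
            if m = k then (A *ᵥ (proj (X m) *ᵥ v)) i else 0 := by
          intro m
          rw [← Matrix.mulVec_mulVec, ← Matrix.mulVec_mulVec, proj_mulVec, hX]
          simp [hi]
        rw [hBdef, Matrix.add_mulVec, Matrix.add_mulVec, Pi.add_apply, Pi.add_apply, e2, e2, e2]
        have h3 : k = 0 ∨ k = 1 ∨ k = 2 := by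
          generalize k = k
          revert k
          decide
        rcases h3 with h | h | h <;> rw [h] <;> simp
      have e3 : (mat A (Finset.univ.filter fun i => k ≠ s i) (fun _ => ((l - ν : ℝ) : ℂ)) *ᵥ
          (proj (X k) *ᵥ v)) i = ((Matrix.diagonal (fun _ => ((l - ν : ℝ) : ℂ)) - A) *ᵥ
          (proj (X k) *ᵥ v)) i := by
        simp only [Matrix.mulVec, mat, dotProduct, Matrix.of_apply]
        simp [hi]
      rw [e3, Matrix.sub_mulVec, Pi.sub_apply, ← e1, hBv, Matrix.mulVec_diagonal, proj_mulVec, hX,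
        if_pos (by simp [hi])]
      simp
    · have e3 : (mat A (Finset.univ.filter fun i => k ≠ s i) (fun _ => ((l - ν : ℝ) : ℂ)) *ᵥ
          (proj (X k) *ᵥ v)) i = ((1 : Matrix (Fin n) (Fin n) ℂ) *ᵥ (proj (X k) *ᵥ v)) i := by
        simp only [Matrix.mulVec, mat, dotProduct, Matrix.of_apply]
        simp [hi]
      rw [e3, Matrix.one_mulVec, proj_mulVec, hX, if_neg (by simp [hi])]
      rfl

theorem opt (δ : ℝ) (h0 : 0 < δ) (h1 : δ < 4/9) : ∃ b : ℝ, 1 < b ∧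
    b - 4 / (9 * ((b - 1 + δ) / (b * (b - 1)))) ≤
      1/9 * (Real.sqrt (5*(1-δ)) + 2 * Real.sqrt δ)^2 := by
  set p := Real.sqrt (5*(1-δ)) with hp
  set q := Real.sqrt δ with hq
  have hp2 : p ^ 2 = 5 * (1 - δ) := Real.sq_sqrt (by linarith)
  have hq2 : q ^ 2 = δ := Real.sq_sqrt h0.le
  have hp0 : 0 < p := Real.sqrt_pos.mpr (by linarith)
  have hq0 : 0 < q := Real.sqrt_pos.mpr h0
  -- the optimal shift is `2 p q / 5`
  set u := 2 * p * q / 5 with hu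
  have hu0 : 0 < u := by positivity
  have huδ : δ < u := by
    have : 5 * q < 2 * p := by
      apply lt_of_pow_lt_pow_left₀ 2 (by positivity)
      nlinarith
    rw [hu, ← hq2]
    nlinarith
  refine ⟨u + 1 - δ, by linarith, le_of_eq ?_⟩
  have hb1 : u + 1 - δ - 1 + δ = u := by ring
  have hb2 : u + 1 - δ - 1 = u - δ := by ring
  have hne : u - δ ≠ 0 := by linarith
  have hne2 : u + 1 - δ ≠ 0 := by linarith
  rw [hb1, hb2]
  have e : 4 / (9 * (u / ((u + 1 - δ) * (u - δ)))) = 4 * ((u + 1 - δ) * (u - δ)) / (9 * u) := by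
    field_simp
  rw [e, sub_eq_iff_eq_add, ← sub_eq_iff_eq_add', eq_div_iff (by positivity)]
  have hu2 : u ^ 2 = 4 * δ * (1 - δ) / 5 := by
    rw [hu, div_pow, mul_pow, mul_pow, hp2, hq2]; ring
  have hpq : p * q = 5 * u / 2 := by rw [hu]; ring
  have : (p + 2 * q) ^ 2 = 5 * (1 - δ) + 10 * u + 4 * δ := by
    linear_combination hp2 + 4 * hq2 + 4 * hpq
  rw [this]
  linear_combination (-5) * hu2

end final

end Paving

/-- Any positive contraction with diagonal entries at most `δ ≤ 4/9` admits a three-paving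
whose largest eigenvalue is at most `(1/9)(√(5(1-δ)) + 2√δ)²`. -/
theorem three_paving_estimate {n : ℕ} (δ : ℝ) (hδ0 : 0 ≤ δ) (hδ1 : δ ≤ 4/9)
    (A : Matrix (Fin n) (Fin n) ℂ)
    (hA : A.PosSemidef) (hA1 : ((1 : Matrix (Fin n) (Fin n) ℂ) - A).PosSemidef)
    (hdiag : ∀ i, (A i i).re ≤ δ) :
    ∃ X₁ X₂ X₃ : Finset (Fin n),
      Disjoint X₁ X₂ ∧ Disjoint X₁ X₃ ∧ Disjoint X₂ X₃ ∧
      X₁ ∪ X₂ ∪ X₃ = Finset.univ ∧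
      ((((1/9 * (Real.sqrt (5*(1-δ)) + 2 * Real.sqrt δ)^2 : ℝ) : ℂ) •
            (1 : Matrix (Fin n) (Fin n) ℂ)
          - (proj X₁ * A * proj X₁ + proj X₂ * A * proj X₂ + proj X₃ * A * proj X₃)).PosSemidef) := by
  rcases hδ0.eq_or_lt with rfl | h0
  · have hz : A = 0 := by
      rw [← hA.trace_eq_zero_iff, Matrix.trace]
      apply Finset.sum_eq_zero
      intro i _
      have h := Complex.nonneg_iff.mp (hA.diag_nonneg (i := i))
      exact Complex.ext (le_antisymm (hdiag i) h.1) h.2.symm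
    refine ⟨Finset.univ, ∅, ∅, by simp, by simp, by simp, by simp, ?_⟩
    rw [hz]
    simp only [mul_zero, zero_mul, add_zero, sub_zero]
    apply Matrix.PosSemidef.smul Matrix.PosSemidef.one
    exact_mod_cast (by positivity : (0 : ℝ) ≤ 1/9 * (Real.sqrt (5*(1-0)) + 2 * Real.sqrt 0)^2)
  rcases hδ1.eq_or_lt with h1 | h1
  · refine ⟨Finset.univ, ∅, ∅, by simp, by simp, by simp, by simp, ?_⟩
    have e1 : proj (Finset.univ : Finset (Fin n)) = 1 := by simp [proj]
    have e2 : proj (∅ : Finset (Fin n)) = 0 := by simp [proj]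
    have e3 : 1/9 * (Real.sqrt (5*(1-δ)) + 2 * Real.sqrt δ)^2 = 1 := by
      rw [h1, show (5 * (1 - 4/9) : ℝ) = (5/3)^2 by norm_num,
        show (4/9 : ℝ) = (2/3)^2 by norm_num, Real.sqrt_sq (by norm_num),
        Real.sqrt_sq (by norm_num)]
      norm_num
    rw [e1, e2, e3]
    simpa using hA1
  · obtain ⟨b, hb, hl⟩ := Paving.opt δ h0 h1
    obtain ⟨s, hs⟩ := Paving.paving_core A hA hA1 δ b hδ0 hb hdiag _ hl
    have h := Paving.paving_psd A hA.isHermitian _ s hs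
      (fun k => Finset.univ.filter fun i => k = s i) (fun k => rfl)
    refine ⟨_, _, _, ?_, ?_, ?_, ?_, h⟩
    · rw [Finset.disjoint_filter]
      intro i _ h1 h2
      rw [← h1] at h2
      exact absurd h2 (by decide)
    · rw [Finset.disjoint_filter]
      intro i _ h1 h2
      rw [← h1] at h2
      exact absurd h2 (by decide)
    · rw [Finset.disjoint_filter]
      intro i _ h1 h2
      rw [← h1] at h2
      exact absurd h2 (by decide)
    · ext i
      simp only [Finset.mem_union, Finset.mem_filter, Finset.mem_univ, true_and, iff_true]
      generalize s i = k
      revert k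
      decide
end
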